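/- arXiv:2009.00446 — 6 statements merged into one kernel-verified Lean document; each statement's English description precedes it below -/
import Mathlib

section
/- For every integer n ≥ 1, ∫_{−π/2}^{π/2} sin((π/2) cos θ − (2n+1)θ) · e^{−(π/2) sin θ} / (cosh(π sin θ) − cos(π cos θ)) dθ = 0. -/
/-!
Replace `π / 2` by a real `a` with `0 < |a| < π`, and put `z = exp (θ * I)`. The denominator is
`2 * |sin (a * z)| ^ 2`, and the even part of the integrand in `θ` is half the real part of
`z ^ (2 * n + 1) / sin (a * z)`. This function of `z` is even, so its mean over the right half of
the unit circle is its mean over the whole circle. As `0` is the only zero of `sin (a * z)` in the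
closed disc, that mean is the limit at `0`, namely `0 ^ (2 * n) / a`.
-/

open Complex ComplexConjugate Filter Function Metric Topology MeasureTheory
open Real (circleAverage)

section CircleAverage

variable {E : Type*} [NormedAddCommGroup E]

theorem circleAverage_eq_of_tendsto_nhdsNE [NormedSpace ℂ E] [CompleteSpace E] {f : ℂ → E} {c : ℂ}
    {R : ℝ} {y : E} (hR : 0 < R) (hf : ∀ z ∈ closedBall c R \ {c}, DifferentiableAt ℂ f z)
    (hy : Tendsto f (𝓝[≠] c) (𝓝 y)) : circleAverage f c R = y := by
  rw [Real.circleAverage_eq_circleIntegral hR.ne',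
    circleIntegral_sub_center_inv_smul_of_differentiable_on_off_countable_of_tendsto hR
      Set.countable_empty (fun z hz ↦ (hf z hz).continuousAt.continuousWithinAt)
      (fun z hz ↦ hf z ⟨ball_subset_closedBall hz.1.1, hz.1.2⟩) hy,
    inv_smul_smul₀ two_pi_I_ne_zero]

theorem circleAverage_zero_eq_of_even [NormedSpace ℝ E] {f : ℂ → E} (hf : f.Even) (R t : ℝ) :
    circleAverage f 0 R = Real.pi⁻¹ • ∫ θ in t..t + Real.pi, f (circleMap 0 R θ) := by
  have hper : Periodic (fun θ ↦ f (circleMap 0 R θ)) Real.pi := fun θ ↦ by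
    have : circleMap 0 R (θ + Real.pi) = -circleMap 0 R θ := by
      simp [circleMap_zero, add_mul, Complex.exp_add]
    simp only [this, hf _]
  by_cases hint : IntervalIntegrable (fun θ ↦ f (circleMap 0 R θ)) volume t (t + Real.pi)
  · have hdouble := hper.intervalIntegral_add_zsmul_eq 2 0
      fun _ _ ↦ hper.intervalIntegrable Real.pi_ne_zero hint _ _
    rw [zero_add, ofNat_zsmul, ofNat_zsmul, nsmul_eq_mul, Nat.cast_ofNat] at hdouble
    rw [Real.circleAverage_def, hdouble, hper.intervalIntegral_add_eq 0 t,
      ← Nat.cast_smul_eq_nsmul ℝ, smul_smul]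
    congr 1
    field
  · have hnot : ¬CircleIntegrable f 0 R := fun h ↦
      hint <| (hper.nsmul 2).intervalIntegrable (by positivity) (t := 0)
        (by simpa [CircleIntegrable] using h) _ _
    rw [circleAverage.integral_undef hnot, intervalIntegral.integral_undef hint, smul_zero]

end CircleAverage

theorem complex_sin_ne_zero_of_norm_lt_pi {w : ℂ} (hw₀ : w ≠ 0) (hw : ‖w‖ < Real.pi) :
    Complex.sin w ≠ 0 := by
  rw [Complex.sin_ne_zero_iff]
  rintro k rfl
  have hk : |(k : ℝ)| < 1 := by
    simpa [abs_of_pos Real.pi_pos, mul_lt_iff_lt_one_left Real.pi_pos] using hw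
  have : k = 0 := Int.abs_lt_one_iff.mp (by exact_mod_cast hk)
  simp [this] at hw₀

theorem tendsto_div_sin_const_mul_nhdsNE_zero {a : ℂ} (ha : a ≠ 0) :
    Tendsto (fun z ↦ z / Complex.sin (a * z)) (𝓝[≠] 0) (𝓝 a⁻¹) := by
  have hderiv : HasDerivAt (fun z ↦ Complex.sin (a * z)) a 0 := by
    simpa using ((hasDerivAt_id (0 : ℂ)).const_mul a).csin
  refine (hderiv.tendsto_slope.inv₀ ha).congr fun z ↦ ?_
  simp [slope_def_field]

theorem circleAverage_pow_div_sin {a : ℂ} (ha₀ : a ≠ 0) {R : ℝ} (hR : 0 < R)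
    (ha : ‖a‖ * R < Real.pi) (k : ℕ) :
    circleAverage (fun z ↦ z ^ (k + 1) / Complex.sin (a * z)) 0 R = 0 ^ k / a := by
  refine circleAverage_eq_of_tendsto_nhdsNE hR (fun z hz ↦ ?_) ?_
  · have hz_norm : ‖z‖ ≤ R := by simpa using hz.1
    have hsin : Complex.sin (a * z) ≠ 0 := by
      refine complex_sin_ne_zero_of_norm_lt_pi (mul_ne_zero ha₀ hz.2) (lt_of_le_of_lt ?_ ha)
      rw [norm_mul]
      gcongr
    fun_prop (disch := exact hsin)
  · have hpow : Tendsto (fun z : ℂ ↦ z ^ k) (𝓝[≠] 0) (𝓝 (0 ^ k)) :=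
      ((continuous_pow k).tendsto 0).mono_left nhdsWithin_le_nhds
    simpa only [pow_succ, mul_div_assoc, div_eq_mul_inv, mul_assoc] using
      hpow.mul (tendsto_div_sin_const_mul_nhdsNE_zero ha₀)

section UnitCircle

variable {a : ℂ} (ha₀ : a ≠ 0) (ha : ‖a‖ < Real.pi)
include ha₀ ha

theorem sin_mul_circleMap_zero_one_ne_zero (θ : ℝ) : Complex.sin (a * circleMap 0 1 θ) ≠ 0 :=
  complex_sin_ne_zero_of_norm_lt_pi (by simpa using ha₀) (by simpa using ha)

theorem continuous_circleMap_zero_one_pow_div_sin (k : ℕ) :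
    Continuous fun θ ↦ circleMap 0 1 θ ^ k / Complex.sin (a * circleMap 0 1 θ) :=
  Continuous.div (by fun_prop) (by fun_prop) (sin_mul_circleMap_zero_one_ne_zero ha₀ ha)

theorem integral_circleMap_zero_one_pow_div_sin (n : ℕ) :
    ∫ θ in -(Real.pi / 2)..Real.pi / 2,
        circleMap 0 1 θ ^ (2 * n + 1) / Complex.sin (a * circleMap 0 1 θ) =
      Real.pi * (0 ^ (2 * n) / a) := by
  have heven : Function.Even fun z : ℂ ↦ z ^ (2 * n + 1) / Complex.sin (a * z) := fun z ↦ by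
    simp only [mul_neg, Complex.sin_neg, Odd.neg_pow ⟨n, rfl⟩, neg_div_neg_eq]
  have havg := circleAverage_pow_div_sin ha₀ one_pos ((mul_one ‖a‖).trans_lt ha) (2 * n)
  rw [circleAverage_zero_eq_of_even heven 1 (-(Real.pi / 2)), neg_add_eq_sub, sub_half] at havg
  rw [← havg, ← real_smul, smul_inv_smul₀ Real.pi_ne_zero]

end UnitCircle

theorem sin_add_ofReal_mul_I (x y : ℝ) :
    Complex.sin (x + y * I) = ⟨Real.sin x * Real.cosh y, Real.cos x * Real.sinh y⟩ := by
  rw [Complex.sin_add_mul_I, mk_eq_add_mul_I]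
  push_cast
  ring

theorem cosh_two_mul_sub_cos_two_mul (x y : ℝ) :
    Real.cosh (2 * y) - Real.cos (2 * x) = 2 * normSq (Complex.sin (x + y * I)) := by
  rw [sin_add_ofReal_mul_I, normSq_mk, Real.cosh_two_mul, Real.cos_two_mul, ← sub_eq_zero]
  linear_combination (1 - 2 * Real.sin x ^ 2) * Real.cosh_sq y -
    (2 + 2 * Real.sinh y ^ 2) * Real.sin_sq_add_cos_sq x

theorem sin_sub_mul_exp_neg_add_sin_add_mul_exp (x y φ : ℝ) :
    Real.sin (x - φ) * Real.exp (-y) + Real.sin (x + φ) * Real.exp y =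
      2 * (exp (φ * I) * conj (Complex.sin (x + y * I))).re := by
  rw [sin_add_ofReal_mul_I, mul_re, conj_re, conj_im, exp_ofReal_mul_I_re, exp_ofReal_mul_I_im,
    Real.sin_sub, Real.sin_add, Real.cosh_eq, Real.sinh_eq]
  ring

theorem ofReal_mul_circleMap_zero_one (a θ : ℝ) :
    a * circleMap 0 1 θ = (a * Real.cos θ : ℝ) + (a * Real.sin θ : ℝ) * I := by
  rw [circleMap_zero, exp_mul_I]
  push_cast
  ring

theorem integral_add_comp_neg {E : Type*} [NormedAddCommGroup E] [NormedSpace ℝ E] {f : ℝ → E}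
    {c : ℝ} (hf : IntervalIntegrable f volume (-c) c) :
    ∫ x in -c..c, (f x + f (-x)) = (2 : ℝ) • ∫ x in -c..c, f x := by
  have hf_neg : IntervalIntegrable (fun x ↦ f (-x)) volume (-c) c := by
    simpa using ((IntervalIntegrable.iff_comp_neg).mp hf).symm
  rw [intervalIntegral.integral_add hf hf_neg, intervalIntegral.integral_comp_neg, neg_neg,
    two_smul]

/-- The integrand of the theorem, with a real parameter `a` in place of `π / 2`. The factors `2 * a`
are bracketed so that the denominator has the form `cosh (2 * y) - cos (2 * x)` with
`x + y * I = a * exp (θ * I)`; it never vanishes when `0 < |a| < π`. -/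
noncomputable def sinExpKernel (a : ℝ) (n : ℕ) (θ : ℝ) : ℝ :=
  Real.sin (a * Real.cos θ - (2 * (n : ℝ) + 1) * θ) * Real.exp (-a * Real.sin θ) /
    (Real.cosh (2 * (a * Real.sin θ)) - Real.cos (2 * (a * Real.cos θ)))

theorem sinExpKernel_add_sinExpKernel_neg (a : ℝ) (n : ℕ) (θ : ℝ) :
    sinExpKernel a n θ + sinExpKernel a n (-θ) =
      (circleMap 0 1 θ ^ (2 * n + 1) / Complex.sin (a * circleMap 0 1 θ)).re := by
  have hpow : circleMap 0 1 θ ^ (2 * n + 1) = exp (((2 * n + 1) * θ : ℝ) * I) := by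
    rw [circleMap_zero_pow, circleMap_zero]
    simp
  have hnum := sin_sub_mul_exp_neg_add_sin_add_mul_exp (a * Real.cos θ) (a * Real.sin θ)
    ((2 * n + 1) * θ)
  simp only [sinExpKernel, Real.cos_neg, Real.sin_neg, mul_neg, neg_mul, neg_neg, Real.cosh_neg,
    sub_neg_eq_add]
  rw [← add_div, hnum, cosh_two_mul_sub_cos_two_mul, mul_div_mul_left _ _ two_ne_zero, hpow,
    ofReal_mul_circleMap_zero_one, div_eq_mul_inv, div_eq_mul_inv, inv_def, ← mul_assoc,
    re_mul_ofReal]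

theorem continuous_sinExpKernel {a : ℝ} (ha₀ : a ≠ 0) (ha : |a| < Real.pi) (n : ℕ) :
    Continuous (sinExpKernel a n) := by
  unfold sinExpKernel
  refine Continuous.div (by fun_prop) (by fun_prop) fun θ ↦ ?_
  rw [cosh_two_mul_sub_cos_two_mul, ← ofReal_mul_circleMap_zero_one]
  have := sin_mul_circleMap_zero_one_ne_zero (ofReal_ne_zero.mpr ha₀) (by simpa using ha) θ
  simpa using this

theorem two_mul_integral_sinExpKernel {a : ℝ} (ha₀ : a ≠ 0) (ha : |a| < Real.pi) (n : ℕ) :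
    2 * ∫ θ in -(Real.pi / 2)..Real.pi / 2, sinExpKernel a n θ =
      Real.pi * (0 ^ (2 * n) / a) := by
  have ha₀' : (a : ℂ) ≠ 0 := ofReal_ne_zero.mpr ha₀
  have ha' : ‖(a : ℂ)‖ < Real.pi := by simpa using ha
  have hcont := continuous_circleMap_zero_one_pow_div_sin ha₀' ha' (2 * n + 1)
  calc 2 * ∫ θ in -(Real.pi / 2)..Real.pi / 2, sinExpKernel a n θ
    _ = ∫ θ in -(Real.pi / 2)..Real.pi / 2, (sinExpKernel a n θ + sinExpKernel a n (-θ)) :=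
      (integral_add_comp_neg ((continuous_sinExpKernel ha₀ ha n).intervalIntegrable _ _)).symm
    _ = ∫ θ in -(Real.pi / 2)..Real.pi / 2,
          (circleMap 0 1 θ ^ (2 * n + 1) / Complex.sin (a * circleMap 0 1 θ)).re := by
      simp only [sinExpKernel_add_sinExpKernel_neg]
    _ = (∫ θ in -(Real.pi / 2)..Real.pi / 2,
          circleMap 0 1 θ ^ (2 * n + 1) / Complex.sin (a * circleMap 0 1 θ)).re :=
      reCLM.intervalIntegral_comp_comm (hcont.intervalIntegrable _ _)
    _ = Real.pi * (0 ^ (2 * n) / a) := by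
      rw [integral_circleMap_zero_one_pow_div_sin ha₀' ha']
      norm_cast

theorem stmt_13_general {a : ℝ} (ha₀ : a ≠ 0) (ha : |a| < Real.pi) (n : ℕ) :
    ∫ θ in -(Real.pi / 2)..Real.pi / 2,
        Real.sin (a * Real.cos θ - (2 * (n : ℝ) + 1) * θ) * Real.exp (-a * Real.sin θ) /
          (Real.cosh (2 * (a * Real.sin θ)) - Real.cos (2 * (a * Real.cos θ)))
      = if n = 0 then Real.pi / (2 * a) else 0 := by
  change ∫ θ in -(Real.pi / 2)..Real.pi / 2, sinExpKernel a n θ = _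
  have hint := two_mul_integral_sinExpKernel ha₀ ha n
  split_ifs with hn
  · subst hn
    field_simp at hint ⊢
    linarith
  · simpa [hn] using hint

/-- For every `n ≥ 1`,
`∫_{-π/2}^{π/2} sin((π/2) cos θ - (2n+1)θ) e^{-(π/2) sin θ}
   / (cosh(π sin θ) - cos(π cos θ)) dθ = 0`. -/
theorem stmt_13 (n : ℕ) (hn : 1 ≤ n) :
    ∫ θ in (-(Real.pi/2))..(Real.pi/2),
        Real.sin (Real.pi/2 * Real.cos θ - (2 * (n : ℝ) + 1) * θ) *
          Real.exp (-(Real.pi/2) * Real.sin θ) /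
          (Real.cosh (Real.pi * Real.sin θ) - Real.cos (Real.pi * Real.cos θ))
      = 0 := by
  have ha : |Real.pi / 2| < Real.pi := by
    rw [abs_of_pos Real.pi_div_two_pos]
    exact half_lt_self Real.pi_pos
  simpa only [← mul_assoc, mul_div_cancel₀ Real.pi two_ne_zero,
    if_neg (Nat.one_le_iff_ne_zero.mp hn)] using stmt_13_general Real.pi_div_two_pos.ne' ha n
end

section
/- ∫_{−π/2}^{π/2} cos θ · sin((π/2) cos θ) · e^{−(π/2) sin θ} / (cosh(π sin θ) − cos(π cos θ)) dθ = 1/2 + π²/48. -/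
/-!
Put `z = e^{iθ}`. Since `|sin (a z)|² = (cosh (2a sin θ) - cos (2a cos θ)) / 2`, symmetrizing the
integrand under `θ ↦ -θ` gives `Re (cos θ / sin (a z))`. The function `cos θ / sin (a z)` has period
`π`, so its integral over a half turn is half of its integral over the unit circle. As
`2 z cos θ = z² + 1`, the latter is a multiple of `∮ (z² + 1) / (z² sin (a z)) dz`, whose only pole
inside the circle is the one at `0`, with residue `1 / a + a / 6`.
-/

open Filter Metric Set Topology
open scoped Real

theorem intervalIntegral_add_comp_neg {E : Type*} [NormedAddCommGroup E] [NormedSpace ℝ E]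
    {f : ℝ → E} {b : ℝ} (hf : IntervalIntegrable f MeasureTheory.volume (-b) b) :
    ∫ x in -b..b, (f x + f (-x)) = (2 : ℝ) • ∫ x in -b..b, f x := by
  have hf_neg : IntervalIntegrable (fun x ↦ f (-x)) MeasureTheory.volume (-b) b := by
    simpa using ((IntervalIntegrable.iff_comp_neg (f := f) (a := -b) (b := b)).1 hf).symm
  rw [intervalIntegral.integral_add hf hf_neg, intervalIntegral.integral_comp_neg, neg_neg,
    two_smul]

section Residue

variable {E : Type*} [NormedAddCommGroup E] [NormedSpace ℂ E] [CompleteSpace E]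

theorem circleIntegral_sub_pow_inv_smul_sum_eq_zero {c : ℂ} {R : ℝ} (hR : 0 < R) (n : ℕ)
    (a : ℕ → E) :
    (∮ z in C(c, R), ((z - c) ^ (n + 1))⁻¹ • ∑ k ∈ Finset.range n, (z - c) ^ k • a k) = 0 := by
  have term_integrable (k : ℕ) : CircleIntegrable (fun z ↦ (z - c) ^ (k - n - 1 : ℤ) • a k) c R :=
    ContinuousOn.circleIntegrable hR.le <| ContinuousOn.smul
      (ContinuousOn.zpow₀ (by fun_prop) _ fun z hz ↦
        .inl (sub_ne_zero.2 (ne_of_mem_sphere hz hR.ne'))) continuousOn_const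
  have term_integral : ∀ k ∈ Finset.range n,
      (∮ z in C(c, R), (z - c) ^ (k - n - 1 : ℤ) • a k) = 0 := fun k hk ↦ by
    have exponent_ne : (k - n - 1 : ℤ) ≠ -1 := by have := Finset.mem_range.1 hk; lia
    rw [circleIntegral.integral_smul_const, circleIntegral.integral_sub_zpow_of_ne exponent_ne,
      zero_smul]
  calc
    _ = ∮ z in C(c, R), ∑ k ∈ Finset.range n, (z - c) ^ (k - n - 1 : ℤ) • a k := by
      refine circleIntegral.integral_congr hR.le fun z hz ↦ ?_
      have hz : z - c ≠ 0 := sub_ne_zero.2 (ne_of_mem_sphere hz hR.ne')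
      simp only [smul_smul, Finset.smul_sum, pow_succ', mul_inv]
      congr! 2 with k
      rw [zpow_sub_one₀ hz, zpow_sub₀ hz, zpow_natCast, zpow_natCast]
      ring
    _ = 0 := by
      rw [circleIntegral.integral_fun_sum fun k _ ↦ term_integrable k,
        Finset.sum_eq_zero term_integral]

-- The `a k` are the Taylor coefficients of `f` at `c` below order `n`. The limit `y` is the one of
-- order `n`, which is the residue at `c` of the integrand.
theorem circleIntegral_sub_pow_inv_smul_of_tendsto {c : ℂ} {R : ℝ} (hR : 0 < R) {f : ℂ → E}
    (hc : ContinuousOn f (closedBall c R \ {c})) (hd : DifferentiableOn ℂ f (ball c R \ {c}))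
    {n : ℕ} {a : ℕ → E} {y : E}
    (hy : Tendsto (fun z ↦ ((z - c) ^ n)⁻¹ • (f z - ∑ k ∈ Finset.range n, (z - c) ^ k • a k))
      (𝓝[≠] c) (𝓝 y)) :
    (∮ z in C(c, R), ((z - c) ^ (n + 1))⁻¹ • f z) = (2 * π * Complex.I) • y := by
  have pow_ne : ∀ z ≠ c, ∀ m, (z - c) ^ m ≠ 0 := fun z hz m ↦ pow_ne_zero m (sub_ne_zero.2 hz)
  have integrable_of_continuousOn {g : ℂ → E} (hg : ContinuousOn g (sphere c R)) :
      CircleIntegrable (fun z ↦ ((z - c) ^ (n + 1))⁻¹ • g z) c R :=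
    ContinuousOn.circleIntegrable hR.le <| ContinuousOn.smul
      (ContinuousOn.inv₀ (by fun_prop) fun z hz ↦ pow_ne z (ne_of_mem_sphere hz hR.ne') _) hg
  have f_continuousOn : ContinuousOn f (sphere c R) :=
    hc.mono fun z hz ↦ ⟨sphere_subset_closedBall hz, ne_of_mem_sphere hz hR.ne'⟩
  calc
    _ = ∮ z in C(c, R), (((z - c) ^ (n + 1))⁻¹ • f z -
          ((z - c) ^ (n + 1))⁻¹ • ∑ k ∈ Finset.range n, (z - c) ^ k • a k) := by
      rw [circleIntegral.integral_sub (integrable_of_continuousOn f_continuousOn)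
        (integrable_of_continuousOn (by fun_prop)),
        circleIntegral_sub_pow_inv_smul_sum_eq_zero hR, sub_zero]
    _ = ∮ z in C(c, R), (z - c)⁻¹ • ((z - c) ^ n)⁻¹ •
          (f z - ∑ k ∈ Finset.range n, (z - c) ^ k • a k) := by
      simp only [smul_smul, smul_sub, pow_succ', mul_inv]
    _ = _ := by
      open Complex in
      refine circleIntegral_sub_center_inv_smul_of_differentiable_on_off_countable_of_tendsto
        hR countable_empty ?_ (fun z hz ↦ ?_) hy
      · exact (ContinuousOn.inv₀ (by fun_prop) fun z hz ↦ pow_ne z hz.2 n).smul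
          (hc.sub (by fun_prop))
      · have hfz := hd.differentiableAt ((isOpen_ball.sdiff isClosed_singleton).mem_nhds hz.1)
        have := pow_ne z hz.1.2 n
        fun_prop (disch := assumption)

end Residue

section Sine

open Complex

theorem sin_ne_zero_of_norm_lt_pi {w : ℂ} (hw₀ : w ≠ 0) (hw : ‖w‖ < π) : sin w ≠ 0 := by
  rw [Complex.sin_ne_zero_iff]
  rintro k rfl
  have hk : |(k : ℝ)| < 1 := by
    simpa [abs_of_pos Real.pi_pos, mul_lt_iff_lt_one_left Real.pi_pos] using hw
  have : k = 0 := Int.abs_lt_one_iff.1 (by exact_mod_cast hk)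
  simp [this] at hw₀

theorem sin_re (w : ℂ) : (sin w).re = Real.sin w.re * Real.cosh w.im := by
  simp [sin_eq w, sin_ofReal_re, cosh_ofReal_re]

theorem sin_im (w : ℂ) : (sin w).im = Real.cos w.re * Real.sinh w.im := by
  simp [sin_eq w, cos_ofReal_re, sinh_ofReal_re]

theorem two_mul_normSq_sin (w : ℂ) :
    2 * normSq (sin w) = Real.cosh (2 * w.im) - Real.cos (2 * w.re) := by
  rw [normSq_apply, sin_re, sin_im, Real.cosh_two_mul, Real.cos_two_mul']
  linear_combination (1 + 2 * Real.sinh w.im ^ 2) * Real.sin_sq_add_cos_sq w.re +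
    (2 * Real.sin w.re ^ 2 - 1) * Real.cosh_sq w.im

theorem tendsto_div_sin : Tendsto (fun w : ℂ ↦ w / sin w) (𝓝[≠] 0) (𝓝 1) := by
  have h := (hasDerivAt_iff_tendsto_slope.1 (hasDerivAt_sin 0)).inv₀ (by simp)
  simpa [slope_fun_def_field] using h

theorem tendsto_sub_sin_div_pow_three :
    Tendsto (fun w : ℂ ↦ (w - sin w) / w ^ 3) (𝓝[≠] 0) (𝓝 (1 / 6)) := by
  rw [tendsto_iff_norm_sub_tendsto_zero]
  have hz : Tendsto (fun w : ℂ ↦ ‖w‖ ^ 2 / 100) (𝓝[≠] 0) (𝓝 0) :=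
    tendsto_nhdsWithin_of_tendsto_nhds <| Continuous.tendsto' (by fun_prop) _ _ (by simp)
  refine squeeze_zero' (.of_forall fun _ ↦ norm_nonneg _) ?_ hz
  filter_upwards [nhdsWithin_le_nhds (closedBall_mem_nhds (0 : ℂ) one_pos), self_mem_nhdsWithin]
    with w hw (hw₀ : w ≠ 0)
  calc
    ‖(w - sin w) / w ^ 3 - 1 / 6‖ = ‖sin w - (w - w ^ 3 / 6)‖ / ‖w‖ ^ 3 := by
      rw [← norm_pow, ← norm_div, ← norm_neg]
      congr 1
      field_simp
      ring
    _ ≤ ‖w‖ ^ 5 / 100 / ‖w‖ ^ 3 := by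
      gcongr
      exact sin_bound (by simpa using hw)
    _ = ‖w‖ ^ 2 / 100 := by
      have := norm_ne_zero_iff.2 hw₀
      field_simp

theorem tendsto_div_sin_sub_one_div_sq :
    Tendsto (fun w : ℂ ↦ (w / sin w - 1) / w ^ 2) (𝓝[≠] 0) (𝓝 (1 / 6)) := by
  have h := tendsto_div_sin.mul tendsto_sub_sin_div_pow_three
  rw [one_mul] at h
  refine h.congr' ?_
  filter_upwards [nhdsWithin_le_nhds (ball_mem_nhds (0 : ℂ) Real.pi_pos), self_mem_nhdsWithin]
    with w hw (hw₀ : w ≠ 0)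
  have := sin_ne_zero_of_norm_lt_pi hw₀ (by simpa using hw)
  field_simp

theorem tendsto_sq_add_one_mul_div_sin_sub_div_sq {a : ℂ} (ha : a ≠ 0) :
    Tendsto (fun z : ℂ ↦ ((z ^ 2 + 1) * (z / sin (a * z)) - a⁻¹) / z ^ 2) (𝓝[≠] 0)
      (𝓝 (a⁻¹ + a / 6)) := by
  have mul_tendsto : Tendsto (a * ·) (𝓝[≠] 0) (𝓝[≠] 0) := by
    simpa using (continuous_const_mul a).continuousWithinAt.tendsto_nhdsWithin (x := 0)
      (s := {0}ᶜ) (t := {0}ᶜ) fun z hz ↦ mul_ne_zero ha hz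
  have linear_in_sin_quotients (z : ℂ) (hz : z ≠ 0) :
      a⁻¹ * (a * z / sin (a * z)) + a * ((a * z / sin (a * z) - 1) / (a * z) ^ 2) =
        ((z ^ 2 + 1) * (z / sin (a * z)) - a⁻¹) / z ^ 2 := by
    field_simp
    ring
  have h := ((tendsto_div_sin.comp mul_tendsto).const_mul a⁻¹).add
    ((tendsto_div_sin_sub_one_div_sq.comp mul_tendsto).const_mul a)
  rw [mul_one, mul_one_div] at h
  exact h.congr' (eventually_nhdsWithin_of_forall linear_in_sin_quotients)

theorem circleIntegral_sq_add_one_div_sq_mul_sin {a : ℂ} (ha : a ≠ 0) {R : ℝ} (hR : 0 < R)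
    (haR : ‖a‖ * R < π) :
    (∮ z in C(0, R), (z ^ 2 + 1) / (z ^ 2 * sin (a * z))) = 2 * π * I * (a⁻¹ + a / 6) := by
  have sin_ne : ∀ z ∈ closedBall (0 : ℂ) R \ {0}, sin (a * z) ≠ 0 := fun z hz ↦ by
    refine sin_ne_zero_of_norm_lt_pi (mul_ne_zero ha hz.2) ?_
    have := mem_closedBall_zero_iff.1 hz.1
    grw [norm_mul, this]
    exact haR
  have h := circleIntegral_sub_pow_inv_smul_of_tendsto hR (c := 0) (n := 2)
    (f := fun z ↦ (z ^ 2 + 1) * (z / sin (a * z))) (a := Pi.single 0 a⁻¹) (y := a⁻¹ + a / 6)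
    (by fun_prop (disch := assumption))
    (DifferentiableOn.mul (by fun_prop) (.div (by fun_prop) (by fun_prop) fun z hz ↦
      sin_ne z ⟨ball_subset_closedBall hz.1, hz.2⟩))
    (by simpa [Finset.sum_range_succ, div_eq_inv_mul]
      using tendsto_sq_add_one_mul_div_sin_sub_div_sq ha)
  rw [← smul_eq_mul, ← h]
  refine circleIntegral.integral_congr hR.le fun z hz ↦ ?_
  have hz₀ : z ≠ 0 := ne_of_mem_sphere hz hR.ne'
  simp only [sub_zero, smul_eq_mul]
  field_simp
  ring

end Sine

section CosDivSinExp

open Complex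

/-- The function `θ ↦ cos θ / sin (a e^{iθ})`, which is the value of `(z + z⁻¹) / (2 sin (a z))` at
the point `z = e^{iθ}` of the unit circle. -/
noncomputable def cosDivSinExp (a : ℂ) (θ : ℝ) : ℂ :=
  cos θ / sin (a * exp (θ * I))

theorem sin_mul_exp_ne_zero {a : ℂ} (ha₀ : a ≠ 0) (ha : ‖a‖ < π) (θ : ℝ) :
    sin (a * exp (θ * I)) ≠ 0 :=
  sin_ne_zero_of_norm_lt_pi (mul_ne_zero ha₀ (exp_ne_zero _))
    (by rwa [norm_mul, norm_exp_ofReal_mul_I, mul_one])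

theorem continuous_cosDivSinExp {a : ℂ} (ha₀ : a ≠ 0) (ha : ‖a‖ < π) :
    Continuous (cosDivSinExp a) :=
  .div (by fun_prop) (by fun_prop) (sin_mul_exp_ne_zero ha₀ ha)

theorem periodic_cosDivSinExp (a : ℂ) : Function.Periodic (cosDivSinExp a) π := fun θ ↦ by
  simp [cosDivSinExp, add_mul, exp_add, cos_add_pi]

theorem integral_cosDivSinExp {a : ℂ} (ha₀ : a ≠ 0) (ha : ‖a‖ < π) :
    ∫ θ in 0..2 * π, cosDivSinExp a θ = π * (a⁻¹ + a / 6) := by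
  have integrand_eq (θ : ℝ) :
      deriv (circleMap 0 1) θ • ((circleMap 0 1 θ ^ 2 + 1) /
        (circleMap 0 1 θ ^ 2 * sin (a * circleMap 0 1 θ))) = 2 * I * cosDivSinExp a θ := by
    have sq_add_one : exp (θ * I) ^ 2 + 1 = 2 * exp (θ * I) * cos θ := by
      rw [cos, neg_mul, exp_neg]
      field_simp
    simp only [deriv_circleMap, circleMap_zero, ofReal_one, one_mul, smul_eq_mul, cosDivSinExp,
      sq_add_one]
    field_simp
  have h := circleIntegral_sq_add_one_div_sq_mul_sin ha₀ one_pos (by rwa [mul_one])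
  simp only [circleIntegral, integrand_eq, intervalIntegral.integral_const_mul] at h
  refine mul_left_cancel₀ (mul_ne_zero two_ne_zero I_ne_zero) (h.trans ?_)
  ring

theorem integral_cosDivSinExp_half_turn {a : ℂ} (ha₀ : a ≠ 0) (ha : ‖a‖ < π) :
    ∫ θ in -(π / 2)..π / 2, cosDivSinExp a θ = π / 2 * (a⁻¹ + a / 6) := by
  have h := (periodic_cosDivSinExp a).intervalIntegral_add_zsmul_eq 2 0
    fun _ _ ↦ (continuous_cosDivSinExp ha₀ ha).intervalIntegrable _ _
  rw [(periodic_cosDivSinExp a).intervalIntegral_add_eq 0 (-(π / 2)),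
    show -(π / 2) + π = π / 2 by ring] at h
  simp only [zero_add, zsmul_eq_mul, Int.cast_ofNat, integral_cosDivSinExp ha₀ ha] at h
  linear_combination -h / 2

theorem two_mul_normSq_sin_mul_exp (a θ : ℝ) :
    2 * normSq (sin (a * exp (θ * I))) =
      Real.cosh (2 * a * Real.sin θ) - Real.cos (2 * a * Real.cos θ) := by
  rw [two_mul_normSq_sin, re_ofReal_mul, im_ofReal_mul, exp_ofReal_mul_I_re, exp_ofReal_mul_I_im,
    mul_assoc, mul_assoc]

theorem cosh_sub_cos_pos {a : ℝ} (ha₀ : a ≠ 0) (ha : |a| < π) (θ : ℝ) :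
    0 < Real.cosh (2 * a * Real.sin θ) - Real.cos (2 * a * Real.cos θ) := by
  rw [← two_mul_normSq_sin_mul_exp]
  have sin_ne : sin (a * exp (θ * I)) ≠ 0 :=
    sin_mul_exp_ne_zero (ofReal_ne_zero.2 ha₀) (by rwa [norm_real]) θ
  exact mul_pos two_pos (normSq_pos.2 sin_ne)

theorem cosDivSinExp_ofReal_re (a θ : ℝ) :
    (cosDivSinExp a θ).re =
      2 * Real.cos θ * Real.sin (a * Real.cos θ) * Real.cosh (a * Real.sin θ) /
        (Real.cosh (2 * a * Real.sin θ) - Real.cos (2 * a * Real.cos θ)) := by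
  rw [cosDivSinExp, div_eq_mul_inv, ← ofReal_cos, re_ofReal_mul, inv_re, sin_re, re_ofReal_mul,
    im_ofReal_mul, exp_ofReal_mul_I_re, exp_ofReal_mul_I_im, ← two_mul_normSq_sin_mul_exp]
  field_simp

end CosDivSinExp

/-- The integrand of the theorem with the parameter `a` in place of `π / 2`. -/
noncomputable def sinExpIntegrand (a θ : ℝ) : ℝ :=
  Real.cos θ * Real.sin (a * Real.cos θ) * Real.exp (-a * Real.sin θ) /
    (Real.cosh (2 * a * Real.sin θ) - Real.cos (2 * a * Real.cos θ))

theorem continuous_sinExpIntegrand {a : ℝ} (ha₀ : a ≠ 0) (ha : |a| < π) :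
    Continuous (sinExpIntegrand a) :=
  .div (by fun_prop) (by fun_prop) fun θ ↦ (cosh_sub_cos_pos ha₀ ha θ).ne'

theorem sinExpIntegrand_add_neg (a θ : ℝ) :
    sinExpIntegrand a θ + sinExpIntegrand a (-θ) = (cosDivSinExp a θ).re := by
  simp only [cosDivSinExp_ofReal_re, sinExpIntegrand, Real.cos_neg, Real.sin_neg, mul_neg,
    neg_mul, neg_neg, Real.cosh_neg, Real.cosh_eq (a * Real.sin θ)]
  ring

theorem stmt_14_general {a : ℝ} (ha₀ : a ≠ 0) (ha : |a| < π) :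
    ∫ θ in -(π / 2)..π / 2, Real.cos θ * Real.sin (a * Real.cos θ) * Real.exp (-a * Real.sin θ) /
        (Real.cosh (2 * a * Real.sin θ) - Real.cos (2 * a * Real.cos θ)) =
      π / (4 * a) + π * a / 24 := by
  have ha₀' : (a : ℂ) ≠ 0 := Complex.ofReal_ne_zero.2 ha₀
  have ha' : ‖(a : ℂ)‖ < π := by rwa [Complex.norm_real]
  have two_mul_integral :
      2 * ∫ θ in -(π / 2)..π / 2, sinExpIntegrand a θ = π / 2 * (a⁻¹ + a / 6) := calc
    _ = ∫ θ in -(π / 2)..π / 2, (sinExpIntegrand a θ + sinExpIntegrand a (-θ)) :=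
      (intervalIntegral_add_comp_neg
        ((continuous_sinExpIntegrand ha₀ ha).intervalIntegrable _ _)).symm
    _ = ∫ θ in -(π / 2)..π / 2, (cosDivSinExp a θ).re := by simp only [sinExpIntegrand_add_neg]
    _ = (∫ θ in -(π / 2)..π / 2, cosDivSinExp a θ).re :=
      intervalIntegral.intervalIntegral_re
        ((continuous_cosDivSinExp ha₀' ha').intervalIntegrable _ _)
    _ = π / 2 * (a⁻¹ + a / 6) := by
      rw [integral_cosDivSinExp_half_turn ha₀' ha']
      exact_mod_cast Complex.ofReal_re (π / 2 * (a⁻¹ + a / 6))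
  change ∫ θ in -(π / 2)..π / 2, sinExpIntegrand a θ = _
  field_simp at two_mul_integral ⊢
  linarith

/-- `∫_{-π/2}^{π/2} cos θ · sin((π/2) cos θ) · e^{-(π/2) sin θ}
   / (cosh(π sin θ) - cos(π cos θ)) dθ = 1/2 + π²/48`. -/
theorem stmt_14 :
    ∫ θ in (-(Real.pi/2))..(Real.pi/2),
        Real.cos θ * Real.sin (Real.pi/2 * Real.cos θ) *
          Real.exp (-(Real.pi/2) * Real.sin θ) /
          (Real.cosh (Real.pi * Real.sin θ) - Real.cos (Real.pi * Real.cos θ))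
      = 1/2 + Real.pi ^ 2 / 48 := by
  have h := stmt_14_general (a := π / 2) (by positivity) (by
    rw [abs_of_pos (by positivity)]; exact half_lt_self Real.pi_pos)
  rw [mul_div_cancel₀ _ two_ne_zero] at h
  exact h.trans (by field_simp; ring)
end

section
/- ∫₀¹ (cosh(πv/2) cos(πv/2) + sinh(πv/2) sin(πv/2)) / (cosh(πv) + cos(πv)) dv = 1/2. -/
/-! With `x = πv/2`, the denominator `cosh 2x + cos 2x` is `2 |z|²` for `z = cos x + i sinh x`, and
the numerator is `|z|² Im (z' / z)`, so the integrand is half the angular velocity of `z`. This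
curve never meets the branch cut of `Complex.arg`, and its argument grows from `0` at `x = 0` to
`π / 2` at `x = π / 2`. -/

open Complex (I slitPlane)

theorem hasDerivAt_arg_comp {z : ℝ → ℂ} {z' : ℂ} {t : ℝ} (hz : HasDerivAt z z' t)
    (hmem : z t ∈ slitPlane) : HasDerivAt (fun s ↦ (z s).arg) (z' / z t).im t := by
  simpa only [Function.comp_def, Complex.imCLM_apply, Complex.log_im] using
    Complex.imCLM.hasFDerivAt.comp_hasDerivAt t (hz.clog_real hmem)

theorem integral_im_div_eq_arg_sub_arg {z z' : ℝ → ℂ} {a b : ℝ}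
    (hz : ∀ t ∈ Set.uIcc a b, HasDerivAt z (z' t) t) (hz' : ContinuousOn z' (Set.uIcc a b))
    (hmem : ∀ t ∈ Set.uIcc a b, z t ∈ slitPlane) :
    ∫ t in a..b, (z' t / z t).im = (z b).arg - (z a).arg := by
  have hcont : ContinuousOn z (Set.uIcc a b) := HasDerivAt.continuousOn hz
  refine intervalIntegral.integral_eq_sub_of_hasDerivAt
    (fun t ht ↦ hasDerivAt_arg_comp (hz t ht) (hmem t ht)) (ContinuousOn.intervalIntegrable ?_)
  exact Complex.continuous_im.comp_continuousOn
    (hz'.div hcont fun t ht ↦ Complex.slitPlane_ne_zero (hmem t ht))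

/-- The curve `x ↦ cos x + i sinh x` in the complex plane, whose angular velocity about the origin
is twice the integrand of `stmt_15` at `x = πv/2`. -/
noncomputable def cosSinhCurve (x : ℝ) : ℂ := Real.cos x + Real.sinh x * I

namespace cosSinhCurve

theorem re_eq (x : ℝ) : (cosSinhCurve x).re = Real.cos x := by
  simp [cosSinhCurve, -Complex.ofReal_cos, -Complex.ofReal_sinh]

theorem im_eq (x : ℝ) : (cosSinhCurve x).im = Real.sinh x := by
  simp [cosSinhCurve, -Complex.ofReal_cos, -Complex.ofReal_sinh]

theorem mem_slitPlane (x : ℝ) : cosSinhCurve x ∈ slitPlane := by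
  rw [Complex.mem_slitPlane_iff, re_eq, im_eq]
  rcases eq_or_ne x 0 with rfl | hx
  · simp
  · exact .inr (Real.sinh_ne_zero.mpr hx)

theorem hasDerivAt (x : ℝ) :
    HasDerivAt cosSinhCurve ((-Real.sin x : ℝ) + Real.cosh x * I) x :=
  (Real.hasDerivAt_cos x).ofReal_comp.add ((Real.hasDerivAt_sinh x).ofReal_comp.mul_const I)

theorem cosh_two_mul_add_cos_two_mul (x : ℝ) :
    Real.cosh (2 * x) + Real.cos (2 * x) = 2 * Complex.normSq (cosSinhCurve x) := by
  rw [Complex.normSq_apply, re_eq, im_eq, Real.cosh_two_mul, Real.cos_two_mul, Real.cosh_sq]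
  ring

theorem im_deriv_div_self (x : ℝ) :
    (((-Real.sin x : ℝ) + Real.cosh x * I) / cosSinhCurve x).im =
      2 * ((Real.cosh x * Real.cos x + Real.sinh x * Real.sin x) /
        (Real.cosh (2 * x) + Real.cos (2 * x))) := by
  have hne : Complex.normSq (cosSinhCurve x) ≠ 0 :=
    (Complex.normSq_pos.mpr (Complex.slitPlane_ne_zero (mem_slitPlane x))).ne'
  rw [cosh_two_mul_add_cos_two_mul, Complex.div_im, re_eq, im_eq]
  simp only [Complex.add_re, Complex.add_im, Complex.re_ofReal_mul, Complex.im_ofReal_mul,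
    Complex.ofReal_re, Complex.ofReal_im, Complex.I_re, Complex.I_im]
  field_simp
  ring

theorem arg_zero : (cosSinhCurve 0).arg = 0 := by simp [cosSinhCurve]

theorem arg_pi_div_two : (cosSinhCurve (Real.pi / 2)).arg = Real.pi / 2 := by
  rw [Complex.arg_eq_pi_div_two_iff, re_eq, im_eq]
  exact ⟨Real.cos_pi_div_two, Real.sinh_pos_iff.mpr Real.pi_div_two_pos⟩

end cosSinhCurve

theorem integral_cosh_mul_cos_add_sinh_mul_sin_div (a b : ℝ) :
    ∫ x in a..b, (Real.cosh x * Real.cos x + Real.sinh x * Real.sin x) /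
        (Real.cosh (2 * x) + Real.cos (2 * x)) =
      ((cosSinhCurve b).arg - (cosSinhCurve a).arg) / 2 := by
  have hangle := integral_im_div_eq_arg_sub_arg (a := a) (b := b)
    (fun x _ ↦ cosSinhCurve.hasDerivAt x) (by fun_prop) (fun x _ ↦ cosSinhCurve.mem_slitPlane x)
  simp only [cosSinhCurve.im_deriv_div_self, intervalIntegral.integral_const_mul] at hangle
  linarith

/-- `∫₀¹ (cosh(πv/2) cos(πv/2) + sinh(πv/2) sin(πv/2)) / (cosh(πv) + cos(πv)) dv = 1/2`. -/
theorem stmt_15 :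
    ∫ v in (0:ℝ)..1,
        (Real.cosh (Real.pi * v / 2) * Real.cos (Real.pi * v / 2) +
          Real.sinh (Real.pi * v / 2) * Real.sin (Real.pi * v / 2)) /
          (Real.cosh (Real.pi * v) + Real.cos (Real.pi * v))
      = 1/2 := by
  let F (x : ℝ) := (Real.cosh x * Real.cos x + Real.sinh x * Real.sin x) /
    (Real.cosh (2 * x) + Real.cos (2 * x))
  calc
    _ = ∫ v in (0:ℝ)..1, F (Real.pi / 2 * v) := by
      simp only [F, div_mul_eq_mul_div, mul_div_cancel₀ _ (two_ne_zero (α := ℝ))]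
    _ = (Real.pi / 2)⁻¹ * ∫ x in (0:ℝ)..(Real.pi / 2), F x := by
      rw [intervalIntegral.integral_comp_mul_left F Real.pi_div_two_pos.ne', mul_zero, mul_one,
        smul_eq_mul]
    _ = (Real.pi / 2)⁻¹ * ((Real.pi / 2 - 0) / 2) := by
      rw [integral_cosh_mul_cos_add_sinh_mul_sin_div, cosSinhCurve.arg_zero,
        cosSinhCurve.arg_pi_div_two]
    _ = 1 / 2 := by
      field_simp
      ring
end

section
/- ∫₀¹ [cos(πv/2) cosh(πv/2)(2v² − 1) − (2v² − 4v + 1) sin(πv/2) sinh(πv/2)] / [(cosh(πv) + cos(πv))(2v² − 2v + 1)²] dv = −π²/48. -/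
/-!
With `z = π / 2 * (1 - (1 + i) v)`, a path from `π / 2` to `-iπ / 2`, the integrand is `π / 4` times
the imaginary part of `z' / (z² sin z)`. Near `0`,
`1 / (z² sin z) = 1 / z³ + 1 / (6 z) + K z` with `K` holomorphic on the disc of radius `π`, odd, and
commuting with complex conjugation. A primitive of `K` therefore has constant imaginary part on the
two coordinate axes, and so does the primitive `-1 / (2 z²)` of `1 / z³`. Between the endpoints,
which lie on the axes, only the primitive `log z / 6` contributes: the integral is
`π / 4 * (arg (-iπ / 2) - arg (π / 2)) / 6 = -π² / 48`.
-/

section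

open Asymptotics Complex Filter Metric Set Topology
open scoped ComplexConjugate Real

theorem im_eq_of_hasDerivAt_of_segment {H K : ℂ → ℂ} {x y : ℂ}
    (hH : ∀ w ∈ segment ℝ x y, HasDerivAt H (K w) w)
    (hK : ∀ w ∈ segment ℝ x y, (K w * (y - x)).im = 0) : (H y).im = (H x).im := by
  have hmem : ∀ t ∈ Icc (0 : ℝ) 1, AffineMap.lineMap x y t ∈ segment ℝ x y := fun t ht ↦ by
    rw [segment_eq_image_lineMap]
    exact mem_image_of_mem _ ht
  have hderiv : ∀ t ∈ Icc (0 : ℝ) 1,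
      HasDerivAt (fun t : ℝ ↦ (H (AffineMap.lineMap x y t)).im) 0 t := fun t ht ↦
    hK _ (hmem t ht) ▸ imCLM.hasFDerivAt.comp_hasDerivAt t
      ((hH _ (hmem t ht)).comp t AffineMap.hasDerivAt_lineMap)
  have hconst := constant_of_has_deriv_right_zero
    (fun t ht ↦ (hderiv t ht).continuousAt.continuousWithinAt)
    (fun t ht ↦ (hderiv t (Ico_subset_Icc_self ht)).hasDerivWithinAt) 1
    (right_mem_Icc.2 zero_le_one)
  simpa only [AffineMap.lineMap_apply_one, AffineMap.lineMap_apply_zero] using hconst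

theorem im_mul_self_eq_zero_of_odd {K : ℂ → ℂ} (hodd : Function.Odd K)
    (hconj : ∀ z, K (conj z) = conj (K z)) {z : ℂ} (hz : (z ^ 2).im = 0) : (K z * z).im = 0 := by
  -- `z ^ 2` is real exactly when `z` lies on a coordinate axis, that is, when `conj z = ±z`.
  rw [← conj_eq_iff_im] at hz ⊢
  rw [map_pow, sq_eq_sq_iff_eq_or_eq_neg] at hz
  rw [map_mul, ← hconj]
  rcases hz with hz | hz <;> simp [hz, hodd z]

theorem im_eq_of_hasDerivAt_of_odd {H K : ℂ → ℂ} {z : ℂ}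
    (hH : ∀ w ∈ segment ℝ 0 z, HasDerivAt H (K w) w) (hodd : Function.Odd K)
    (hconj : ∀ z, K (conj z) = conj (K z)) (hz : (z ^ 2).im = 0) : (H z).im = (H 0).im := by
  refine im_eq_of_hasDerivAt_of_segment hH fun w hw ↦ ?_
  obtain ⟨t, -, rfl⟩ : ∃ t ∈ Icc (0 : ℝ) 1, (t : ℂ) * z = w := by
    simpa [segment_eq_image] using hw
  rw [sub_zero]
  rcases eq_or_ne t 0 with rfl | ht
  · rw [ofReal_zero, zero_mul, hodd.map_zero, zero_mul, zero_im]
  · have h : (K (t * z) * (t * z)).im = 0 := im_mul_self_eq_zero_of_odd hodd hconj <| by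
      rw [mul_pow, ← ofReal_pow, im_ofReal_mul, hz, mul_zero]
    rw [mul_left_comm, im_ofReal_mul] at h
    exact (mul_eq_zero.1 h).resolve_left ht

theorem sin_ne_zero_of_mem_ball {z : ℂ} (hz : z ∈ ball 0 π) (h0 : z ≠ 0) : sin z ≠ 0 := by
  rw [Complex.sin_ne_zero_iff]
  rintro k rfl
  have hk : k ≠ 0 := by
    rintro rfl
    simp at h0
  have hk_abs : (1 : ℝ) ≤ |(k : ℝ)| := mod_cast Int.one_le_abs hk
  rw [mem_ball_zero_iff, norm_mul, norm_intCast, norm_real, Real.norm_of_nonneg Real.pi_nonneg]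
    at hz
  nlinarith [Real.pi_pos]

/-- The function `1 / (z² sin z)` minus its principal part at `0`. Division by zero gives it the
value `0` at `0`, which is also its limit there. -/
noncomputable def cscDivSqRegularPart (z : ℂ) : ℂ :=
  1 / (z ^ 2 * sin z) - 1 / z ^ 3 - 1 / (6 * z)

theorem cscDivSqRegularPart_odd : Function.Odd cscDivSqRegularPart := fun z ↦ by
  simp only [cscDivSqRegularPart, sin_neg, one_div, neg_sq, mul_neg, inv_neg,
    Odd.neg_pow (by decide : Odd 3)]
  ring

theorem cscDivSqRegularPart_conj (z : ℂ) :
    cscDivSqRegularPart (conj z) = conj (cscDivSqRegularPart z) := by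
  simp only [cscDivSqRegularPart, map_sub, map_div₀, map_mul, map_pow, map_one, map_ofNat, sin_conj]

theorem sin_sub_isBigO_pow_five : (fun z ↦ sin z - (z - z ^ 3 / 6)) =O[𝓝 0] (· ^ 5) := by
  refine .of_bound (1 / 100) ?_
  filter_upwards [closedBall_mem_nhds (0 : ℂ) one_pos] with z hz
  rw [norm_pow, one_div_mul_eq_div]
  exact sin_bound (mem_closedBall_zero_iff.1 hz)

theorem cscDivSqRegularPart_isBigO_id : cscDivSqRegularPart =O[𝓝[≠] 0] id := by
  -- The function equals `(6 z - (6 + z²) sin z) / (6 z³ sin z)`, with orders `5` and `4` at `0`.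
  have hnum : (fun z ↦ 6 * z - (6 + z ^ 2) * sin z) =O[𝓝 0] (· ^ 5) := by
    have hcoeff : (fun z : ℂ ↦ 6 + z ^ 2) =O[𝓝 0] (fun _ ↦ (1 : ℂ)) :=
      (by fun_prop : Continuous fun z : ℂ ↦ 6 + z ^ 2).continuousAt.isBigO_one ℂ
    have herror := hcoeff.mul sin_sub_isBigO_pow_five
    simp only [one_mul] at herror
    refine (((isBigO_refl _ _).const_mul_left (1 / 6)).sub herror).congr_left fun z ↦ ?_
    ring
  have hinv : (fun z ↦ (sin z)⁻¹) =O[𝓝[≠] 0] (·⁻¹) :=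
    (isEquivalent_sin.inv.isBigO).mono nhdsWithin_le_nhds
  have hquot := ((hnum.mono nhdsWithin_le_nhds).mul
    ((isBigO_refl (fun z : ℂ ↦ (z ^ 3)⁻¹) _).mul hinv)).const_mul_left (1 / 6)
  refine hquot.congr' ?_ ?_
  · filter_upwards [nhdsWithin_le_nhds (ball_mem_nhds (0 : ℂ) Real.pi_pos), self_mem_nhdsWithin]
      with z hz (h0 : z ≠ 0)
    have hsin := sin_ne_zero_of_mem_ball hz h0
    rw [cscDivSqRegularPart]
    field_simp
    ring
  · filter_upwards [self_mem_nhdsWithin] with z (h0 : z ≠ 0)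
    rw [id]
    field_simp

theorem differentiableOn_cscDivSqRegularPart :
    DifferentiableOn ℂ cscDivSqRegularPart (ball 0 π) := by
  refine (differentiableOn_compl_singleton_and_continuousAt_iff
    (ball_mem_nhds 0 Real.pi_pos)).1 ⟨fun z ⟨hz, (hz0 : z ≠ 0)⟩ ↦ ?_, ?_⟩
  · have hsin := sin_ne_zero_of_mem_ball hz hz0
    have hz2sin : z ^ 2 * sin z ≠ 0 := mul_ne_zero (pow_ne_zero 2 hz0) hsin
    have hz3 : z ^ 3 ≠ 0 := pow_ne_zero 3 hz0
    have h6z : 6 * z ≠ 0 := mul_ne_zero (by norm_num) hz0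
    refine DifferentiableAt.differentiableWithinAt ?_
    unfold cscDivSqRegularPart
    fun_prop (disch := assumption)
  · rw [continuousAt_iff_punctured_nhds, cscDivSqRegularPart_odd.map_zero]
    exact cscDivSqRegularPart_isBigO_id.trans_tendsto (tendsto_id.mono_left nhdsWithin_le_nhds)

theorem hasDerivAt_one_div_two_mul_sq {z : ℂ} (hz : z ≠ 0) :
    HasDerivAt (fun z : ℂ ↦ 1 / (2 * z ^ 2)) (-1 / z ^ 3) z := by
  have h := ((hasDerivAt_pow 2 z).const_mul 2).inv (mul_ne_zero two_ne_zero (pow_ne_zero 2 hz))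
  simp only [one_div]
  refine h.congr_deriv ?_
  field_simp
  norm_num

theorem exists_primitive_one_div_sq_mul_sin :
    ∃ G : ℂ → ℂ, (∀ z ∈ ball 0 π ∩ slitPlane, HasDerivAt G (1 / (z ^ 2 * sin z)) z) ∧
      ∀ z ∈ ball 0 π, (z ^ 2).im = 0 → (G z).im = arg z / 6 := by
  obtain ⟨H, hH0, hH⟩ := differentiableOn_cscDivSqRegularPart.isExactOn_ball.with_val_at 0 0
  refine ⟨fun z ↦ H z - 1 / (2 * z ^ 2) + log z / 6, fun z ⟨hz, hslit⟩ ↦ ?_, fun z hz hz2 ↦ ?_⟩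
  · have hz0 : z ≠ 0 := slitPlane_ne_zero hslit
    have hsin := sin_ne_zero_of_mem_ball hz hz0
    refine (((hH z hz).sub (hasDerivAt_one_div_two_mul_sq hz0)).add
      ((hasDerivAt_log hslit).div_const 6)).congr_deriv ?_
    rw [cscDivSqRegularPart]
    field_simp
    ring
  · have hHim : (H z).im = 0 := by
      have hseg : segment ℝ 0 z ⊆ ball 0 π :=
        (convex_ball 0 π).segment_subset (mem_ball_self Real.pi_pos) hz
      rw [im_eq_of_hasDerivAt_of_odd (fun w hw ↦ hH w (hseg hw)) cscDivSqRegularPart_odd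
        cscDivSqRegularPart_conj hz2, hH0, zero_im]
    have hsq : (1 / (2 * z ^ 2)).im = 0 := by simp [hz2]
    have hlog : (log z / 6).im = arg z / 6 := by
      rw [← log_im]
      exact div_ofNat_im _ _
    rw [add_im, sub_im, hHim, hsq, hlog, sub_zero, zero_add]

theorem integral_im_div_sq_mul_sin {γ γ' : ℝ → ℂ} {a b : ℝ}
    (hγ : ∀ t ∈ uIcc a b, HasDerivAt γ (γ' t) t) (hγ' : ContinuousOn γ' (uIcc a b))
    (hmem : ∀ t ∈ uIcc a b, γ t ∈ ball 0 π ∩ slitPlane)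
    (ha : (γ a ^ 2).im = 0) (hb : (γ b ^ 2).im = 0) :
    ∫ t in a..b, (γ' t / (γ t ^ 2 * sin (γ t))).im = (arg (γ b) - arg (γ a)) / 6 := by
  obtain ⟨G, hG, hGim⟩ := exists_primitive_one_div_sq_mul_sin
  have hderiv : ∀ t ∈ uIcc a b,
      HasDerivAt (fun t ↦ (G (γ t)).im) (γ' t / (γ t ^ 2 * sin (γ t))).im t := fun t ht ↦ by
    simpa [Function.comp_def, div_eq_inv_mul] using
      imCLM.hasFDerivAt.comp_hasDerivAt t ((hG _ (hmem t ht)).comp t (hγ t ht))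
  have hcont : ContinuousOn (fun t ↦ (γ' t / (γ t ^ 2 * sin (γ t))).im) (uIcc a b) := by
    have hγc : ContinuousOn γ (uIcc a b) := fun t ht ↦ (hγ t ht).continuousAt.continuousWithinAt
    refine continuous_im.comp_continuousOn
      (hγ'.div ((hγc.pow 2).mul (continuous_sin.comp_continuousOn hγc)) fun t ht ↦ ?_)
    have h0 : γ t ≠ 0 := slitPlane_ne_zero (hmem t ht).2
    exact mul_ne_zero (pow_ne_zero 2 h0) (sin_ne_zero_of_mem_ball (hmem t ht).1 h0)
  rw [intervalIntegral.integral_eq_sub_of_hasDerivAt hderiv hcont.intervalIntegrable,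
    hGim _ (hmem a left_mem_uIcc).1 ha, hGim _ (hmem b right_mem_uIcc).1 hb]
  ring

/-- The affine parametrisation by `[0, 1]` of the segment from `π / 2` to `-iπ / 2`. -/
noncomputable def chord (v : ℝ) : ℂ := π / 2 * (1 - (1 + I) * v)

theorem chord_re (v : ℝ) : (chord v).re = π / 2 * (1 - v) := by simp [chord]

theorem chord_im (v : ℝ) : (chord v).im = -(π / 2 * v) := by simp [chord]

theorem arg_chord_zero : arg (chord 0) = 0 := by
  have h : chord 0 = (π / 2 : ℝ) := by simp [chord]
  rw [h, arg_ofReal_of_nonneg Real.pi_div_two_pos.le]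

theorem arg_chord_one : arg (chord 1) = -(π / 2) := by
  have h : chord 1 = (π / 2 : ℝ) * -I := by simp [chord]
  rw [h, arg_real_mul _ Real.pi_div_two_pos, arg_neg_I]

theorem hasDerivAt_chord (v : ℝ) : HasDerivAt chord (π / 2 * -(1 + I)) v := by
  have h := ((ofRealCLM.hasDerivAt (x := v)).const_mul (1 + I)).const_sub 1 |>.const_mul (π / 2 : ℂ)
  exact h.congr_deriv (by simp)

theorem normSq_chord (v : ℝ) : normSq (chord v) = (π / 2) ^ 2 * (2 * v ^ 2 - 2 * v + 1) := by
  rw [normSq_apply, chord_re, chord_im]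
  ring

theorem chord_mem_ball_inter_slitPlane {v : ℝ} (hv : v ∈ Icc 0 1) :
    chord v ∈ ball 0 π ∩ slitPlane := by
  refine ⟨?_, ?_⟩
  · rw [mem_ball_zero_iff]
    refine lt_of_pow_lt_pow_left₀ 2 Real.pi_nonneg ?_
    rw [← normSq_eq_norm_sq, normSq_chord]
    have hquad : 2 * v ^ 2 - 2 * v + 1 ≤ 1 := by nlinarith [hv.1, hv.2]
    nlinarith [sq_pos_of_pos Real.pi_pos]
  · rw [mem_slitPlane_iff, chord_re, chord_im]
    rcases hv.2.lt_or_eq with h | rfl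
    · exact .inl (mul_pos Real.pi_div_two_pos (sub_pos.2 h))
    · exact .inr (by simp [Real.pi_ne_zero])

theorem normSq_sin (z : ℂ) :
    normSq (sin z) = (Real.cosh (2 * z.im) - Real.cos (2 * z.re)) / 2 := by
  rw [sin_eq, ← ofReal_sin, ← ofReal_cos, ← ofReal_cosh, ← ofReal_sinh, ← ofReal_mul, ← ofReal_mul,
    normSq_add_mul_I, Real.cosh_two_mul, Real.cos_two_mul]
  linear_combination (Real.sin z.re ^ 2 - 1 / 2) * Real.cosh_sq z.im +
    (Real.sinh z.im ^ 2 + 1) * Real.sin_sq_add_cos_sq z.re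

theorem sin_chord (v : ℝ) :
    sin (chord v) = ⟨Real.cos (π * v / 2) * Real.cosh (π * v / 2),
      -(Real.sin (π * v / 2) * Real.sinh (π * v / 2))⟩ := by
  have h : chord v = π / 2 - ((π * v / 2 : ℝ) + (π * v / 2 : ℝ) * I) := by
    rw [chord]
    push_cast
    ring
  rw [h, sin_pi_div_two_sub, cos_add_mul_I]
  simp only [← ofReal_cos, ← ofReal_sin, ← ofReal_cosh, ← ofReal_sinh, ← ofReal_mul]
  apply Complex.ext <;> simp only [sub_re, sub_im, re_ofReal_mul, im_ofReal_mul, ofReal_re,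
    ofReal_im, I_re, I_im, mul_zero, mul_one, sub_zero, zero_sub]

theorem im_neg_one_add_I_mul_div (r : ℝ) (w : ℂ) :
    (r * -(1 + I) / w).im = r * (w.im - w.re) / normSq w := by
  simp only [div_im, mul_re, mul_im, neg_re, neg_im, add_re, add_im, one_re, one_im, I_re, I_im,
    ofReal_re, ofReal_im]
  ring

theorem integrand_eq_im_deriv_chord_div (v : ℝ) :
    (Real.cos (π * v / 2) * Real.cosh (π * v / 2) * (2 * v ^ 2 - 1) -
        (2 * v ^ 2 - 4 * v + 1) * Real.sin (π * v / 2) * Real.sinh (π * v / 2)) /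
        ((Real.cosh (π * v) + Real.cos (π * v)) * (2 * v ^ 2 - 2 * v + 1) ^ 2) =
      π / 4 * (π / 2 * -(1 + I) / (chord v ^ 2 * sin (chord v))).im := by
  have hnormSq : normSq (sin (chord v)) = (Real.cosh (π * v) + Real.cos (π * v)) / 2 := by
    have hre : 2 * (chord v).re = π - π * v := by rw [chord_re]; ring
    have him : 2 * (chord v).im = -(π * v) := by rw [chord_im]; ring
    rw [normSq_sin, hre, him, Real.cosh_neg, Real.cos_pi_sub, sub_neg_eq_add]
  have h := im_neg_one_add_I_mul_div (π / 2) (chord v ^ 2 * sin (chord v))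
  push_cast at h
  rw [h, map_mul, map_pow, normSq_chord, hnormSq, sin_chord]
  simp only [pow_two (chord v), mul_re, mul_im, chord_re, chord_im]
  field_simp
  ring

end

/-- `∫₀¹ [cos(πv/2) cosh(πv/2)(2v²-1) - (2v²-4v+1) sin(πv/2) sinh(πv/2)]
   / [(cosh(πv) + cos(πv))(2v²-2v+1)²] dv = -π²/48`. -/
theorem stmt_16 :
    ∫ v in (0:ℝ)..1,
        (Real.cos (Real.pi * v / 2) * Real.cosh (Real.pi * v / 2) * (2 * v ^ 2 - 1) -
          (2 * v ^ 2 - 4 * v + 1) * Real.sin (Real.pi * v / 2) * Real.sinh (Real.pi * v / 2)) /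
          ((Real.cosh (Real.pi * v) + Real.cos (Real.pi * v)) * (2 * v ^ 2 - 2 * v + 1) ^ 2)
      = -(Real.pi ^ 2) / 48 := by
  have hchord : ∀ v ∈ Set.uIcc (0 : ℝ) 1, chord v ∈ Metric.ball 0 Real.pi ∩ Complex.slitPlane :=
    fun v hv ↦ chord_mem_ball_inter_slitPlane (Set.uIcc_of_le (zero_le_one' ℝ) ▸ hv)
  have hstart : (chord 0 ^ 2).im = 0 := by simp [pow_two, chord_im]
  have hend : (chord 1 ^ 2).im = 0 := by simp [pow_two, chord_re]
  simp only [integrand_eq_im_deriv_chord_div]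
  rw [intervalIntegral.integral_const_mul, integral_im_div_sq_mul_sin
    (fun v _ ↦ hasDerivAt_chord v) continuousOn_const hchord hstart hend,
    arg_chord_zero, arg_chord_one]
  ring
end

section
/- The improper integral ∫₀^∞ (1/(v sinh(πv/2)) − 2/(π v²)) dv converges and equals −ln 2. -/
open MeasureTheory

/-!
Comparing the partial fraction expansions of `π coth (π w / 2)` and `π coth (π w)`, whose difference
is `π / sinh (π w)`, expands `1 / (v sinh (a v)) - 1 / (a v ^ 2)` for `a > 0` into the series
`(2 / a) ∑_{m ≥ 1} (-1) ^ m / ((π m / a) ^ 2 + v ^ 2)`. Its `m`-th term has integral `(-1) ^ m / m`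
over the half-line, and the alternating harmonic series gives `-log 2`. The norms `1 / m` of the
terms are not summable; grouping the terms in consecutive pairs makes all summands nonpositive, with
summable integrals, and so justifies integrating termwise.
-/

section

open Filter Real Set Topology

theorem sum_range_one_div_odd_sub_one_div_even (n : ℕ) :
    ∑ k ∈ Finset.range n, (1 / (2 * (k : ℝ) + 1) - 1 / (2 * (k : ℝ) + 2)) =
      harmonic (2 * n) - harmonic n := by
  induction n with
  | zero => simp
  | succ n ih =>
    rw [Finset.sum_range_succ, ih, show 2 * (n + 1) = 2 * n + 1 + 1 by ring,
      harmonic_succ, harmonic_succ, harmonic_succ]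
    push_cast
    field_simp
    ring

theorem tendsto_harmonic_two_mul_sub_harmonic :
    Tendsto (fun n : ℕ ↦ (harmonic (2 * n) : ℝ) - harmonic n) atTop (𝓝 (log 2)) := by
  have h_double : Tendsto (fun n : ℕ ↦ 2 * n) atTop atTop :=
    tendsto_id.const_mul_atTop' two_pos
  have h_diff := ((tendsto_harmonic_sub_log.comp h_double).sub
    tendsto_harmonic_sub_log).add_const (log 2)
  rw [sub_self, zero_add] at h_diff
  refine h_diff.congr' ?_
  filter_upwards [eventually_ne_atTop 0] with n hn
  have h_log : log ((2 * n : ℕ) : ℝ) = log 2 + log n := by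
    rw [Nat.cast_mul, Nat.cast_ofNat, log_mul two_ne_zero (Nat.cast_ne_zero.2 hn)]
  simp only [Function.comp_apply, h_log]
  ring

theorem hasSum_one_div_odd_sub_one_div_even :
    HasSum (fun k : ℕ ↦ 1 / (2 * (k : ℝ) + 1) - 1 / (2 * (k : ℝ) + 2)) (log 2) := by
  have h_nonneg (k : ℕ) : 0 ≤ 1 / (2 * (k : ℝ) + 1) - 1 / (2 * (k : ℝ) + 2) := by
    rw [sub_nonneg]
    gcongr
    norm_num
  rw [hasSum_iff_tendsto_nat_of_nonneg h_nonneg]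
  simpa only [sum_range_one_div_odd_sub_one_div_even] using tendsto_harmonic_two_mul_sub_harmonic

theorem hasSum_odd_sub_even {G : Type*} [AddCommGroup G] [UniformSpace G] [IsUniformAddGroup G]
    [CompleteSpace G] [T2Space G] {f : ℕ → G} {s t : G} (hf : HasSum f s)
    (hodd : HasSum (fun k ↦ f (2 * k + 1)) t) :
    HasSum (fun k ↦ f (2 * k + 1) - f (2 * k)) (2 • t - s) := by
  have heven : Summable fun k ↦ f (2 * k) :=
    hf.summable.comp_injective (mul_right_injective₀ two_ne_zero)
  have hsum : s = (∑' k, f (2 * k)) + t := hf.unique (heven.hasSum.even_add_odd hodd)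
  have hvalue : 2 • t - s = t - ∑' k, f (2 * k) := by
    rw [hsum]
    abel
  exact hvalue ▸ hodd.sub heven.hasSum

theorem mul_I_mem_integerComplement {w : ℝ} (hw : w ≠ 0) :
    w * Complex.I ∈ Complex.integerComplement := by
  rintro ⟨n, hn⟩
  have him := congrArg Complex.im hn
  simp only [Complex.intCast_im, Complex.im_ofReal_mul, Complex.I_im, mul_one] at him
  exact hw him.symm

theorem I_mul_cot_mul_I (z : ℂ) :
    Complex.I * Complex.cot (z * Complex.I) = Complex.cosh z / Complex.sinh z := by
  rw [Complex.cot, Complex.cos_mul_I, Complex.sin_mul_I, mul_comm (Complex.sinh z),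
    mul_div_assoc', mul_div_mul_left _ _ Complex.I_ne_zero]

theorem I_mul_cotTerm_mul_I {w : ℝ} (hw : w ≠ 0) (n : ℕ) :
    Complex.I * cotTerm (w * Complex.I) n = ((2 * w / (w ^ 2 + (n + 1) ^ 2) : ℝ) : ℂ) := by
  have h_denom : (w * Complex.I + (n + 1)) * (w * Complex.I - (n + 1)) =
      -((w : ℂ) ^ 2 + (n + 1) ^ 2) := by
    linear_combination (w : ℂ) ^ 2 * Complex.I_sq
  rw [cotTerm_identity (mul_I_mem_integerComplement hw), h_denom, one_div, inv_neg]
  push_cast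
  linear_combination -2 * w * ((w : ℂ) ^ 2 + (n + 1) ^ 2)⁻¹ * Complex.I_sq

theorem hasSum_pi_mul_cosh_div_sinh {w : ℝ} (hw : w ≠ 0) :
    HasSum (fun n : ℕ ↦ 2 * w / (w ^ 2 + ((n : ℝ) + 1) ^ 2))
      (π * (cosh (π * w) / sinh (π * w)) - 1 / w) := by
  have hz := mul_I_mem_integerComplement hw
  have h_cot : HasSum (cotTerm (w * Complex.I))
      (π * Complex.cot (π * (w * Complex.I)) - 1 / (w * Complex.I)) :=
    cot_series_rep' hz ▸ (summable_cotTerm hz).hasSum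
  have h_value : Complex.I * (π * Complex.cot (π * (w * Complex.I)) - 1 / (w * Complex.I)) =
      ((π * (cosh (π * w) / sinh (π * w)) - 1 / w : ℝ) : ℂ) := by
    push_cast
    rw [← I_mul_cot_mul_I, mul_assoc (π : ℂ), mul_sub, mul_left_comm, one_div, mul_inv,
      mul_left_comm Complex.I, mul_inv_cancel₀ Complex.I_ne_zero, mul_one, one_div]
  rw [← Complex.hasSum_ofReal, ← h_value]
  simpa only [I_mul_cotTerm_mul_I hw] using h_cot.mul_left Complex.I

theorem cosh_div_sinh_sub_cosh_two_mul_div_sinh_two_mul (x : ℝ) :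
    cosh x / sinh x - cosh (2 * x) / sinh (2 * x) = 1 / sinh (2 * x) := by
  rcases eq_or_ne (sinh x) 0 with hs | hs
  · simp [sinh_two_mul, hs]
  · have hc := (cosh_pos x).ne'
    rw [sinh_two_mul, cosh_two_mul]
    field_simp
    linear_combination cosh_sq x

theorem hasSum_pi_div_sinh {w : ℝ} (hw : w ≠ 0) :
    HasSum (fun k : ℕ ↦ 2 * w / (w ^ 2 + (2 * (k : ℝ) + 2) ^ 2) -
        2 * w / (w ^ 2 + (2 * (k : ℝ) + 1) ^ 2))
      (π / sinh (π * w) - 1 / w) := by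
  have h_odd_term (k : ℕ) : 2 * w / (w ^ 2 + (((2 * k + 1 : ℕ) : ℝ) + 1) ^ 2) =
      1 / 2 * (2 * (w / 2) / ((w / 2) ^ 2 + ((k : ℝ) + 1) ^ 2)) := by
    push_cast
    field_simp
    ring
  have h_odd := (hasSum_pi_mul_cosh_div_sinh (div_ne_zero hw two_ne_zero)).mul_left (1 / 2)
  simp only [← h_odd_term] at h_odd
  convert! hasSum_odd_sub_even (hasSum_pi_mul_cosh_div_sinh hw) h_odd using 1
  · ext k
    push_cast
    ring
  · have h_csch := cosh_div_sinh_sub_cosh_two_mul_div_sinh_two_mul (π * (w / 2))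
    rw [show 2 * (π * (w / 2)) = π * w by ring] at h_csch
    rw [nsmul_eq_mul, Nat.cast_ofNat]
    linear_combination -π * h_csch

theorem inv_sq_add_sq_eq_mul_inv_one_add_sq {c : ℝ} (hc : c ≠ 0) (x : ℝ) :
    (c ^ 2 + x ^ 2)⁻¹ = (c ^ 2)⁻¹ * (1 + (c⁻¹ * x) ^ 2)⁻¹ := by
  field_simp

theorem integrable_inv_sq_add_sq {c : ℝ} (hc : c ≠ 0) :
    Integrable fun x : ℝ ↦ (c ^ 2 + x ^ 2)⁻¹ := by
  simp only [inv_sq_add_sq_eq_mul_inv_one_add_sq hc]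
  exact (integrable_inv_one_add_sq.comp_mul_left' (inv_ne_zero hc)).const_mul _

theorem integral_Ioi_zero_inv_sq_add_sq {c : ℝ} (hc : 0 < c) :
    ∫ x in Ioi (0 : ℝ), (c ^ 2 + x ^ 2)⁻¹ = π / (2 * c) := by
  simp only [inv_sq_add_sq_eq_mul_inv_one_add_sq hc.ne']
  rw [integral_const_mul,
    integral_comp_mul_left_Ioi (fun x : ℝ ↦ (1 + x ^ 2)⁻¹) _ (inv_pos.2 hc), mul_zero,
    integral_Ioi_inv_one_add_sq, arctan_zero, sub_zero, inv_inv, smul_eq_mul]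
  field_simp

section

variable {α ι E : Type*} [MeasurableSpace α] {μ : Measure α} [Countable ι] [NormedAddCommGroup E]
  {F : ι → α → E} {f : α → E}

theorem integrable_of_hasSum_of_summable_integral_norm (hF : ∀ i, Integrable (F i) μ)
    (hsum : Summable fun i ↦ ∫ x, ‖F i x‖ ∂μ) (hf : ∀ᵐ x ∂μ, HasSum (F · x) (f x)) :
    Integrable f μ := by
  have h_meas : AEStronglyMeasurable f μ :=
    aestronglyMeasurable_of_tendsto_ae atTop
      (fun s ↦ Finset.aestronglyMeasurable_fun_sum s fun i _ ↦ (hF i).1) hf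
  refine ⟨h_meas, ?_⟩
  calc ∫⁻ x, ‖f x‖ₑ ∂μ
      ≤ ∫⁻ x, ∑' i, ‖F i x‖ₑ ∂μ := by
        refine lintegral_mono_ae (hf.mono fun x hx ↦ ?_)
        exact hx.enorm_le_of_bounded ENNReal.summable.hasSum fun _ ↦ le_rfl
    _ = ∑' i, ENNReal.ofReal (∫ x, ‖F i x‖ ∂μ) := by
        rw [lintegral_tsum fun i ↦ (hF i).1.enorm]
        simp only [ofReal_integral_norm_eq_lintegral_enorm (hF _)]
    _ < ⊤ := hsum.tsum_ofReal_lt_top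

theorem hasSum_integral_of_hasSum_of_summable_integral_norm [NormedSpace ℝ E]
    (hF : ∀ i, Integrable (F i) μ) (hsum : Summable fun i ↦ ∫ x, ‖F i x‖ ∂μ)
    (hf : ∀ᵐ x ∂μ, HasSum (F · x) (f x)) :
    HasSum (fun i ↦ ∫ x, F i x ∂μ) (∫ x, f x ∂μ) := by
  rw [← integral_congr_ae (hf.mono fun _ hx ↦ hx.tsum_eq)]
  exact hasSum_integral_of_summable_integral_norm hF hsum

end

/-- The `k`-th term of the expansion of `1 / (v * sinh (a * v)) - 1 / (a * v ^ 2)`: the sum of the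
contributions of the poles `± π * m * I / a` of `1 / sinh (a * v)` for the two consecutive values
`m = 2 * k + 1` and `m = 2 * k + 2`, which enter with opposite signs. -/
noncomputable def cschTerm (a : ℝ) (k : ℕ) (v : ℝ) : ℝ :=
  2 / a * (((π * (2 * k + 2) / a) ^ 2 + v ^ 2)⁻¹ - ((π * (2 * k + 1) / a) ^ 2 + v ^ 2)⁻¹)

section

variable {a : ℝ}

theorem hasSum_cschTerm (ha : a ≠ 0) {v : ℝ} (hv : v ≠ 0) :
    HasSum (cschTerm a · v) (1 / (v * sinh (a * v)) - 1 / (a * v ^ 2)) := by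
  have hw : a * v / π ≠ 0 := div_ne_zero (mul_ne_zero ha hv) pi_ne_zero
  convert! (hasSum_pi_div_sinh hw).mul_left (1 / (π * v)) using 1
  · ext k
    have h_term (m : ℝ) (hm : m ≠ 0) :
        2 / a * ((π * m / a) ^ 2 + v ^ 2)⁻¹ =
          1 / (π * v) * (2 * (a * v / π) / ((a * v / π) ^ 2 + m ^ 2)) := by
      field_simp
      ring
    rw [cschTerm, mul_sub, h_term _ (by positivity), h_term _ (by positivity), ← mul_sub]
  · rw [mul_div_cancel₀ _ pi_ne_zero]
    field_simp

theorem cschTerm_nonpos (ha : 0 < a) (k : ℕ) (v : ℝ) : cschTerm a k v ≤ 0 := by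
  refine mul_nonpos_of_nonneg_of_nonpos (by positivity) (sub_nonpos.2 ?_)
  gcongr
  norm_num

theorem integrable_cschTerm (ha : a ≠ 0) (k : ℕ) : Integrable (cschTerm a k) :=
  ((integrable_inv_sq_add_sq (by positivity)).sub
    (integrable_inv_sq_add_sq (by positivity))).const_mul _

theorem integral_Ioi_zero_cschTerm (ha : 0 < a) (k : ℕ) :
    ∫ v in Ioi (0 : ℝ), cschTerm a k v = -(1 / (2 * (k : ℝ) + 1) - 1 / (2 * (k : ℝ) + 2)) := by
  simp only [cschTerm]
  rw [integral_const_mul,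
    integral_sub (integrable_inv_sq_add_sq (by positivity)).integrableOn
      (integrable_inv_sq_add_sq (by positivity)).integrableOn,
    integral_Ioi_zero_inv_sq_add_sq (by positivity),
    integral_Ioi_zero_inv_sq_add_sq (by positivity)]
  field_simp
  ring

theorem summable_integral_norm_cschTerm (ha : 0 < a) :
    Summable fun k ↦ ∫ v in Ioi (0 : ℝ), ‖cschTerm a k v‖ := by
  simp only [norm_of_nonpos (cschTerm_nonpos ha _ _), integral_neg,
    integral_Ioi_zero_cschTerm ha, neg_neg]
  exact hasSum_one_div_odd_sub_one_div_even.summable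

theorem stmt_17_general (ha : 0 < a) :
    IntegrableOn (fun v : ℝ ↦ 1 / (v * sinh (a * v)) - 1 / (a * v ^ 2)) (Ioi 0) ∧
    ∫ v in Ioi (0 : ℝ), (1 / (v * sinh (a * v)) - 1 / (a * v ^ 2)) = -log 2 := by
  have h_int (k : ℕ) : IntegrableOn (cschTerm a k) (Ioi 0) :=
    (integrable_cschTerm ha.ne' k).integrableOn
  have h_summable := summable_integral_norm_cschTerm ha
  have h_series : ∀ᵐ v ∂volume.restrict (Ioi (0 : ℝ)),
      HasSum (cschTerm a · v) (1 / (v * sinh (a * v)) - 1 / (a * v ^ 2)) :=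
    ae_restrict_of_forall_mem measurableSet_Ioi fun v hv ↦ hasSum_cschTerm ha.ne' (ne_of_gt hv)
  refine ⟨integrable_of_hasSum_of_summable_integral_norm h_int h_summable h_series, ?_⟩
  have h_integral :=
    hasSum_integral_of_hasSum_of_summable_integral_norm h_int h_summable h_series
  simp only [integral_Ioi_zero_cschTerm ha] at h_integral
  exact h_integral.unique hasSum_one_div_odd_sub_one_div_even.neg

end

end

/-- The improper integral `∫₀^∞ (1/(v sinh(πv/2)) - 2/(πv²)) dv` converges
and equals `-ln 2`. -/
theorem stmt_17 :
    IntegrableOn (fun v : ℝ => 1 / (v * Real.sinh (Real.pi * v / 2)) - 2 / (Real.pi * v ^ 2))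
      (Set.Ioi 0) ∧
    ∫ v in Set.Ioi (0:ℝ),
        (1 / (v * Real.sinh (Real.pi * v / 2)) - 2 / (Real.pi * v ^ 2))
      = -Real.log 2 := by
  simpa only [div_mul_eq_mul_div, one_div_div] using stmt_17_general Real.pi_div_two_pos
end

section
/- For all integers p ≥ 1 and k ≥ 0, (−1)^p Γ(2p) [E_{2p}(−iπ(k+1/2)) + E_{2p}(iπ(k+1/2))] / (π(k+1/2))^{2p−1} = 2(−1)^k ∑_{j=1}^{p−1} (−1)^j Γ(2j)/(π(k+1/2))^{2j} − 2(Si(π(k+1/2)) − π/2), where the finite sum is empty when p = 1. -/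
open MeasureTheory

/-- The generalized exponential integral `E_s(z) = ∫₁^∞ v^{-s} e^{-z v} dv`. -/
noncomputable def expInt (s z : ℂ) : ℂ :=
  ∫ v in Set.Ioi (1 : ℝ), (v : ℂ) ^ (-s) * Complex.exp (-z * v)

/-- The sine integral `Si(x) = ∫₀^x (sin t)/t dt`. -/
noncomputable def Si (x : ℝ) : ℝ := ∫ t in (0:ℝ)..x, Real.sin t / t

/-!
The entire function `(e^{iz} - 1) / z`, which is `dslope (fun z ↦ cexp (I * z)) 0`, integrates to
`2i Si(R)` over `[-R, R]`. Cauchy's theorem on the upper half-disc of radius `R` therefore gives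
`Si(R) = π/2 - ½ ∫₀^π exp(iRe^{iθ}) dθ`, and the integral tends to `0` as `R → ∞`, since
`|exp(iRe^{iθ})| = e^{-R sin θ}`. Hence `Si(∞) = π/2`.

Integrating by parts twice, `s E_{s+1}(z) = e^{-z} - z E_s(z)` relates `E_{s+2}` to `E_s`.
Adding the relations at `z = ±ix` and dividing by the right power of `x`, the quantity
`(-1)^p Γ(2p) [E_{2p}(-ix) + E_{2p}(ix)] / x^{2p-1}` changes from `p` to `p + 1` by one explicit
sine term and one explicit cosine term, so it telescopes down to `p = 1`, where
`∫₁^∞ cos(xv)/v² dv = cos x + x (Si(x) - π/2)`. At `x = π(k + 1/2)` the cosine terms vanish and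
`sin x = (-1)^k`.
-/

open Complex Filter Set Topology
open Real (pi_pos)
open scoped Real

theorem integral_add_integral_semicircle_eq_zero {E : Type*} [NormedAddCommGroup E]
    [NormedSpace ℂ E] [CompleteSpace E] {f : ℂ → E} (hf : Differentiable ℂ f) (c : ℂ) (R : ℝ) :
    (∫ x in -R..R, f (c + x)) +
      ∫ θ in 0..π, deriv (circleMap c R) θ • f (circleMap c R θ) = 0 := by
  obtain ⟨F, hF⟩ := hf.isExactOn_univ
  have hf_cont : Continuous f := hf.continuous
  have h_diameter : ∫ x in -R..R, f (c + x) = F (c + R) - F (c - R) := by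
    have hderiv (x : ℝ) : HasDerivAt (fun x : ℝ ↦ F (c + x)) (f (c + x)) x := by
      simpa [Function.comp_def] using
        (hF _ trivial).scomp x (ofRealCLM.hasDerivAt.const_add c)
    rw [intervalIntegral.integral_eq_sub_of_hasDerivAt (fun x _ ↦ hderiv x)
      (Continuous.intervalIntegrable (by fun_prop) _ _)]
    simp [sub_eq_add_neg]
  have h_arc : ∫ θ in 0..π, deriv (circleMap c R) θ • f (circleMap c R θ) =
      F (c - R) - F (c + R) := by
    have hderiv (θ : ℝ) : HasDerivAt (fun θ ↦ F (circleMap c R θ))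
        (deriv (circleMap c R) θ • f (circleMap c R θ)) θ :=
      (hF _ trivial).scomp θ (differentiable_circleMap c R θ).hasDerivAt
    rw [intervalIntegral.integral_eq_sub_of_hasDerivAt (fun θ _ ↦ hderiv θ)
      (Continuous.intervalIntegrable (by simp only [deriv_circleMap]; fun_prop) _ _)]
    simp [circleMap, sub_eq_add_neg]
  rw [h_diameter, h_arc, sub_add_sub_cancel, sub_self]

theorem Si_eq_integral_sinc (x : ℝ) : Si x = ∫ t in (0 : ℝ)..x, Real.sinc t := by
  refine intervalIntegral.integral_congr_ae ?_
  filter_upwards [Measure.ae_ne volume (0 : ℝ)] with t ht _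
  rw [Real.sinc_of_ne_zero ht]

theorem hasDerivAt_Si (x : ℝ) : HasDerivAt Si (Real.sinc x) x := by
  rw [funext Si_eq_integral_sinc]
  exact (Real.continuous_sinc.integral_hasStrictDerivAt 0 x).hasDerivAt

theorem differentiable_dslope_exp_I_mul : Differentiable ℂ (dslope (fun z ↦ cexp (I * z)) 0) := by
  rw [← differentiableOn_univ, differentiableOn_dslope univ_mem]
  fun_prop

theorem dslope_exp_I_mul_add_neg (x : ℝ) :
    dslope (fun z ↦ cexp (I * z)) 0 x + dslope (fun z ↦ cexp (I * z)) 0 (-x) =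
      2 * I * Real.sinc x := by
  rcases eq_or_ne x 0 with rfl | hx
  · have hderiv : HasDerivAt (fun z ↦ cexp (I * z)) I 0 := by
      simpa using ((hasDerivAt_id (0 : ℂ)).const_mul I).cexp
    simp [hderiv.deriv, two_mul]
  · have hx' : (x : ℂ) ≠ 0 := ofReal_ne_zero.2 hx
    rw [dslope_of_ne _ hx', dslope_of_ne _ (neg_ne_zero.2 hx'), Real.sinc_of_ne_zero hx]
    simp only [slope_def_field, ofReal_div, ofReal_sin, Complex.sin]
    field_simp
    simp only [I_sq, mul_zero, Complex.exp_zero]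
    ring_nf
    field_simp
    ring

theorem integral_dslope_exp_I_mul (R : ℝ) :
    ∫ x in -R..R, dslope (fun z ↦ cexp (I * z)) 0 (x : ℂ) = 2 * I * Si R := by
  set f : ℝ → ℂ := fun x ↦ dslope (fun z ↦ cexp (I * z)) 0 x
  have hf_cont : Continuous f := differentiable_dslope_exp_I_mul.continuous.comp continuous_ofReal
  calc ∫ x in -R..R, f x
      = (∫ x in -R..0, f x) + ∫ x in 0..R, f x :=
        (intervalIntegral.integral_add_adjacent_intervals
          (hf_cont.intervalIntegrable _ _) (hf_cont.intervalIntegrable _ _)).symm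
    _ = ∫ x in 0..R, (f x + f (-x)) := by
        rw [intervalIntegral.integral_add (hf_cont.intervalIntegrable _ _)
          (Continuous.intervalIntegrable (by fun_prop) _ _),
          intervalIntegral.integral_comp_neg, neg_zero, add_comm]
    _ = ∫ x in 0..R, 2 * I * (Real.sinc x : ℂ) := by
        simp only [f, ofReal_neg, dslope_exp_I_mul_add_neg]
    _ = 2 * I * Si R := by
        rw [intervalIntegral.integral_const_mul, intervalIntegral.integral_ofReal,
          Si_eq_integral_sinc]

theorem Si_eq_pi_div_two_sub_integral (R : ℝ) :
    (Si R : ℂ) = π / 2 - (∫ θ in 0..π, cexp (I * circleMap 0 R θ)) / 2 := by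
  have h_arc : ∫ θ in 0..π, deriv (circleMap 0 R) θ •
      dslope (fun z ↦ cexp (I * z)) 0 (circleMap 0 R θ) =
        ((∫ θ in 0..π, cexp (I * circleMap 0 R θ)) - π) * I := by
    have hmul (z : ℂ) : z * dslope (fun z ↦ cexp (I * z)) 0 z = cexp (I * z) - 1 := by
      simpa using sub_smul_dslope (fun z ↦ cexp (I * z)) 0 z
    simp only [deriv_circleMap, smul_eq_mul, mul_right_comm _ I, hmul]
    rw [intervalIntegral.integral_mul_const, intervalIntegral.integral_sub
      (Continuous.intervalIntegrable (by fun_prop) _ _) intervalIntegrable_const]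
    simp
  have h := integral_add_integral_semicircle_eq_zero differentiable_dslope_exp_I_mul 0 R
  simp only [zero_add, integral_dslope_exp_I_mul, h_arc] at h
  refine mul_left_cancel₀ (mul_ne_zero two_ne_zero I_ne_zero) ?_
  linear_combination h

theorem tendsto_integral_exp_I_mul_circleMap :
    Tendsto (fun R ↦ ∫ θ in 0..π, cexp (I * circleMap 0 R θ)) atTop (𝓝 0) := by
  have hnorm (R θ : ℝ) : ‖cexp (I * circleMap 0 R θ)‖ = Real.exp (-(R * Real.sin θ)) := by
    simp [norm_exp, circleMap_zero_im]
  have h_ae : ∀ᵐ θ : ℝ, θ ∈ uIoc 0 π → 0 < Real.sin θ := by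
    filter_upwards [Measure.ae_ne volume π] with θ hθ hmem
    rw [uIoc_of_le pi_pos.le] at hmem
    exact Real.sin_pos_of_pos_of_lt_pi hmem.1 (hmem.2.lt_of_ne hθ)
  suffices h : Tendsto (fun R ↦ ∫ θ in 0..π, cexp (I * circleMap 0 R θ)) atTop
      (𝓝 (∫ _ in 0..π, 0)) by simpa only [intervalIntegral.integral_zero] using h
  refine intervalIntegral.tendsto_integral_filter_of_dominated_convergence (fun _ ↦ 1)
    (Eventually.of_forall fun R ↦ Continuous.aestronglyMeasurable (by fun_prop)) ?_
    intervalIntegrable_const ?_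
  · filter_upwards [eventually_ge_atTop 0] with R hR
    filter_upwards [h_ae] with θ hsin hmem
    rw [hnorm, Real.exp_le_one_iff, neg_nonpos]
    exact mul_nonneg hR (hsin hmem).le
  · filter_upwards [h_ae] with θ hsin hmem
    rw [tendsto_zero_iff_norm_tendsto_zero]
    simp only [hnorm]
    exact Real.tendsto_exp_neg_atTop_nhds_zero.comp (tendsto_id.atTop_mul_const (hsin hmem))

theorem tendsto_Si_atTop : Tendsto Si atTop (𝓝 (π / 2)) := by
  have h := (tendsto_integral_exp_I_mul_circleMap.div_const 2).const_sub ((π / 2 : ℝ) : ℂ)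
  rw [← tendsto_ofReal_iff]
  simpa [Si_eq_pi_div_two_sub_integral] using h

section ExpInt

variable {s z : ℂ}

theorem norm_cpow_neg_mul_exp_neg_mul_le (hz : 0 ≤ z.re) {v : ℝ} (hv : 0 < v) :
    ‖(v : ℂ) ^ (-s) * cexp (-z * v)‖ ≤ v ^ (-s.re) := by
  rw [norm_mul, norm_cpow_eq_rpow_re_of_pos hv, neg_re, norm_exp]
  refine mul_le_of_le_one_right (by positivity) (Real.exp_le_one_iff.2 ?_)
  simpa using mul_nonneg hz hv.le

theorem integrableOn_expInt (hs : 1 < s.re) (hz : 0 ≤ z.re) :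
    IntegrableOn (fun v : ℝ ↦ (v : ℂ) ^ (-s) * cexp (-z * v)) (Ioi 1) := by
  refine (integrableOn_Ioi_rpow_of_lt (neg_lt_neg hs) one_pos).mono'
    (Measurable.aestronglyMeasurable (by fun_prop)) ?_
  filter_upwards [ae_restrict_mem measurableSet_Ioi] with v hv
  exact norm_cpow_neg_mul_exp_neg_mul_le hz (one_pos.trans hv)

theorem tendsto_cpow_neg_mul_exp_neg_mul_atTop (hs : 0 < s.re) (hz : 0 ≤ z.re) :
    Tendsto (fun v : ℝ ↦ (v : ℂ) ^ (-s) * cexp (-z * v)) atTop (𝓝 0) := by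
  refine squeeze_zero_norm' ?_ (tendsto_rpow_neg_atTop hs)
  filter_upwards [eventually_gt_atTop 0] with v hv
  exact norm_cpow_neg_mul_exp_neg_mul_le hz hv

theorem hasDerivAt_cpow_neg_mul_exp_neg_mul (hs : s ≠ 0) {v : ℝ} (hv : v ≠ 0) :
    HasDerivAt (fun v : ℝ ↦ (v : ℂ) ^ (-s) * cexp (-z * v))
      (-s * ((v : ℂ) ^ (-(s + 1)) * cexp (-z * v)) - z * ((v : ℂ) ^ (-s) * cexp (-z * v))) v := by
  have hpow := hasDerivAt_ofReal_cpow_const hv (neg_ne_zero.2 hs)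
  have hexp : HasDerivAt (fun v : ℝ ↦ cexp (-z * v)) (cexp (-z * v) * (-z)) v := by
    simpa using (ofRealCLM.hasDerivAt.const_mul (-z)).cexp
  refine (hpow.mul hexp).congr_deriv ?_
  rw [neg_add']
  ring

theorem mul_expInt_add_one (hs : 1 < s.re) (hz : 0 ≤ z.re) :
    s * expInt (s + 1) z = cexp (-z) - z * expInt s z := by
  have hs_ne : s ≠ 0 := by
    rintro rfl
    norm_num at hs
  have h_int_succ := (integrableOn_expInt (s := s + 1) (by simp; linarith) hz).const_mul (-s)
  have h_int := (integrableOn_expInt hs hz).const_mul z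
  have h_ftc := integral_Ioi_of_hasDerivAt_of_tendsto'
    (fun v hv ↦ hasDerivAt_cpow_neg_mul_exp_neg_mul hs_ne (one_pos.trans_le hv).ne')
    (h_int_succ.sub h_int) (tendsto_cpow_neg_mul_exp_neg_mul_atTop (one_pos.trans hs) hz)
  rw [integral_sub h_int_succ h_int, integral_const_mul, integral_const_mul] at h_ftc
  simp only [ofReal_one, one_cpow, mul_one, one_mul, zero_sub] at h_ftc
  unfold expInt
  linear_combination -h_ftc

theorem mul_expInt_add_two (hs : 1 < s.re) (hz : 0 ≤ z.re) :
    s * (s + 1) * expInt (s + 2) z = (s - z) * cexp (-z) + z ^ 2 * expInt s z := by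
  have h_succ := mul_expInt_add_one (s := s + 1) (by simp; linarith) hz
  rw [add_assoc, one_add_one_eq_two] at h_succ
  linear_combination s * h_succ - z * mul_expInt_add_one hs hz

/-- The sum of `E_s(±ix)`, equal to `2 ∫₁^∞ v^{-s} cos(xv) dv`. -/
noncomputable def cosExpInt (s : ℂ) (x : ℝ) : ℂ := expInt s (-(I * x)) + expInt s (I * x)

theorem cosExpInt_eq_integral (hs : 1 < s.re) (x : ℝ) :
    cosExpInt s x = ∫ v in Ioi (1 : ℝ), 2 * ((v : ℂ) ^ (-s) * Real.cos (x * v)) := by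
  rw [cosExpInt, expInt, expInt, ← integral_add (integrableOn_expInt hs (by simp))
    (integrableOn_expInt hs (by simp))]
  congr 1 with v
  have h_cos : cexp (I * x * v) + cexp (-(I * x * v)) = 2 * Complex.cos (x * v) := by
    rw [Complex.two_cos]
    ring_nf
  push_cast
  simp only [neg_mul, neg_neg]
  linear_combination (v : ℂ) ^ (-s) * h_cos

theorem mul_cosExpInt_add_two (hs : 1 < s.re) (x : ℝ) :
    s * (s + 1) * cosExpInt (s + 2) x =
      2 * s * Real.cos x - 2 * x * Real.sin x - x ^ 2 * cosExpInt s x := by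
  have h_pos := mul_expInt_add_two (z := I * x) hs (by simp)
  have h_neg := mul_expInt_add_two (z := -(I * x)) hs (by simp)
  have h_cos : 2 * Complex.cos x = cexp (I * x) + cexp (-(I * x)) := by
    rw [Complex.two_cos, neg_mul, mul_comm I]
  have h_sin : 2 * Complex.sin x = (cexp (-(I * x)) - cexp (I * x)) * I := by
    rw [Complex.two_sin, neg_mul, mul_comm I]
  rw [neg_neg] at h_neg
  push_cast
  unfold cosExpInt
  linear_combination h_pos + h_neg - s * h_cos + x * h_sin +
    x ^ 2 * (expInt s (-(I * x)) + expInt s (I * x)) * I_sq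

theorem integrableOn_cos_mul_div_sq (x : ℝ) :
    IntegrableOn (fun v ↦ Real.cos (x * v) / v ^ 2) (Ioi 1) := by
  have h_sq : IntegrableOn (fun v : ℝ ↦ v ^ (-2 : ℝ)) (Ioi 1) :=
    integrableOn_Ioi_rpow_of_lt (by norm_num) one_pos
  refine h_sq.mono' (Measurable.aestronglyMeasurable (by fun_prop)) ?_
  filter_upwards [ae_restrict_mem measurableSet_Ioi] with v hv
  have hv_pos : 0 < v := one_pos.trans hv
  rw [norm_div, Real.norm_of_nonneg (by positivity : (0 : ℝ) ≤ v ^ 2), Real.rpow_neg hv_pos.le,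
    Real.rpow_two, ← one_div]
  gcongr
  exact Real.abs_cos_le_one _

theorem hasDerivAt_cos_mul_div_add_mul_Si {x v : ℝ} (hx : x ≠ 0) (hv : v ≠ 0) :
    HasDerivAt (fun v ↦ -(Real.cos (x * v) / v + x * Si (x * v))) (Real.cos (x * v) / v ^ 2) v := by
  have h_lin : HasDerivAt (fun v ↦ x * v) x v := by
    simpa using (hasDerivAt_id v).const_mul x
  have h_cos := h_lin.cos.div (hasDerivAt_id v) hv
  have h_Si := ((hasDerivAt_Si (x * v)).comp v h_lin).const_mul x
  refine (h_cos.add h_Si).neg.congr_deriv ?_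
  rw [Real.sinc_of_ne_zero (mul_ne_zero hx hv), id_eq]
  field_simp
  ring

theorem integral_cos_mul_div_sq {x : ℝ} (hx : 0 < x) :
    ∫ v in Ioi 1, Real.cos (x * v) / v ^ 2 = Real.cos x + x * (Si x - π / 2) := by
  have h_cos : Tendsto (fun v ↦ Real.cos (x * v) / v) atTop (𝓝 0) :=
    tendsto_bdd_div_atTop_nhds_zero (.of_forall fun _ ↦ Real.neg_one_le_cos _)
      (.of_forall fun _ ↦ Real.cos_le_one _) tendsto_id
  have h_Si : Tendsto (fun v ↦ x * Si (x * v)) atTop (𝓝 (x * (π / 2))) :=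
    (tendsto_Si_atTop.comp (tendsto_id.const_mul_atTop hx)).const_mul x
  rw [integral_Ioi_of_hasDerivAt_of_tendsto' (fun v hv ↦
    hasDerivAt_cos_mul_div_add_mul_Si hx.ne' (one_pos.trans_le hv).ne')
    (integrableOn_cos_mul_div_sq x) (h_cos.add h_Si).neg]
  simp only [mul_one, div_one]
  ring

theorem cosExpInt_two {x : ℝ} (hx : 0 < x) :
    cosExpInt 2 x = 2 * (Real.cos x + x * (Si x - π / 2)) := by
  have h_real : ((∫ v in Ioi 1, Real.cos (x * v) / v ^ 2 : ℝ) : ℂ) =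
      Real.cos x + x * (Si x - π / 2) := by
    rw [integral_cos_mul_div_sq hx]
    push_cast
    rfl
  rw [cosExpInt_eq_integral (by norm_num), integral_const_mul, ← h_real, ← integral_complex_ofReal]
  congr 2 with v
  rw [cpow_neg, cpow_ofNat]
  push_cast
  ring

theorem cosExpInt_two_mul_succ {p : ℕ} (hp : 1 ≤ p) {x : ℝ} (hx : x ≠ 0) :
    (-1) ^ (p + 1) * Complex.Gamma (2 * (p + 1 : ℕ)) * cosExpInt (2 * (p + 1 : ℕ)) x /
        (x : ℂ) ^ (2 * (p + 1) - 1) =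
      (-1) ^ p * Complex.Gamma (2 * p) * cosExpInt (2 * p) x / (x : ℂ) ^ (2 * p - 1) +
        2 * Real.sin x * ((-1) ^ p * Complex.Gamma (2 * p) / (x : ℂ) ^ (2 * p)) -
        2 * Real.cos x * ((-1) ^ p * Complex.Gamma (2 * p + 1) / (x : ℂ) ^ (2 * p + 1)) := by
  have hx_ne : (x : ℂ) ≠ 0 := ofReal_ne_zero.2 hx
  have hp_ne : (2 * p : ℂ) ≠ 0 := by exact_mod_cast (by positivity : 2 * p ≠ 0)
  have hp_add_one_ne : (2 * p + 1 : ℂ) ≠ 0 := by exact_mod_cast (2 * p).succ_ne_zero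
  have hp_re : 1 < (2 * p : ℂ).re := by
    norm_cast
    lia
  have h_Gamma : Complex.Gamma (2 * p + 2) = (2 * p + 1) * (2 * p * Complex.Gamma (2 * p)) := by
    rw [← Complex.Gamma_add_one _ hp_ne, ← Complex.Gamma_add_one _ hp_add_one_ne, add_assoc,
      one_add_one_eq_two]
  have h_rec := mul_cosExpInt_add_two hp_re x
  have h_cast : (2 * (p + 1 : ℕ) : ℂ) = 2 * p + 2 := by
    push_cast
    ring
  rw [h_cast, h_Gamma, Complex.Gamma_add_one _ hp_ne]
  obtain ⟨n, hn⟩ : ∃ n, 2 * p = n + 1 := ⟨2 * p - 1, by lia⟩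
  rw [show 2 * (p + 1) - 1 = n + 2 by lia, show 2 * p - 1 = n by lia, hn]
  linear_combination (norm := (field_simp; ring))
    (-1) ^ (p + 1) * Complex.Gamma (2 * p) / (x : ℂ) ^ (n + 2) * h_rec

theorem stmt_18_general (p : ℕ) (hp : 1 ≤ p) (x : ℝ) (hx : 0 < x) :
    (-1) ^ p * Complex.Gamma (2 * p) * (expInt (2 * p) (-(I * x)) + expInt (2 * p) (I * x)) /
        (x : ℂ) ^ (2 * p - 1) =
      2 * Real.sin x * ∑ j ∈ Finset.Icc 1 (p - 1),
          (-1) ^ j * Complex.Gamma (2 * j) / (x : ℂ) ^ (2 * j) -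
        2 * Real.cos x * ∑ j ∈ Finset.range p,
          (-1) ^ j * Complex.Gamma (2 * j + 1) / (x : ℂ) ^ (2 * j + 1) -
        2 * (Si x - π / 2) := by
  change _ * cosExpInt (2 * p) x / _ = _
  induction p, hp using Nat.le_induction with
  | base =>
    have hx_ne : (x : ℂ) ≠ 0 := ofReal_ne_zero.2 hx.ne'
    have h_Gamma : Complex.Gamma 2 = 1 := by simp
    simp only [Nat.cast_one, mul_one, cosExpInt_two hx, h_Gamma, Nat.sub_self, zero_lt_one,
      Finset.Icc_eq_empty_of_lt, Finset.sum_empty, Finset.sum_range_one, Nat.cast_zero, mul_zero,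
      zero_add, Complex.Gamma_one, pow_zero, Nat.add_one_sub_one, pow_one]
    field_simp
    ring
  | succ p hp ih =>
    obtain ⟨q, rfl⟩ := Nat.exists_eq_add_of_le' hp
    rw [cosExpInt_two_mul_succ hp hx.ne', ih, Finset.sum_range_succ _ (q + 1),
      add_tsub_cancel_right, add_tsub_cancel_right, Finset.sum_Icc_succ_top (Nat.le_add_left 1 q)]
    ring

end ExpInt

theorem sin_pi_mul_natCast_add_half (k : ℕ) : Real.sin (π * (k + 1 / 2)) = (-1) ^ k := by
  rw [show π * (k + 1 / 2) = π / 2 + k * π by ring, Real.sin_add_nat_mul_pi, Real.sin_pi_div_two,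
    mul_one]

theorem cos_pi_mul_natCast_add_half (k : ℕ) : Real.cos (π * (k + 1 / 2)) = 0 := by
  rw [show π * (k + 1 / 2) = π / 2 + k * π by ring, Real.cos_add_nat_mul_pi, Real.cos_pi_div_two,
    mul_zero]

/-- For all integers `p ≥ 1` and `k ≥ 0`,
`(-1)^p Γ(2p) [E_{2p}(-iπ(k+1/2)) + E_{2p}(iπ(k+1/2))] / (π(k+1/2))^{2p-1}
  = 2(-1)^k ∑_{j=1}^{p-1} (-1)^j Γ(2j)/(π(k+1/2))^{2j} - 2(Si(π(k+1/2)) - π/2)`. -/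
theorem stmt_18 (p : ℕ) (hp : 1 ≤ p) (k : ℕ) :
    (-1) ^ p * Complex.Gamma (2 * (p : ℂ)) *
        (expInt (2 * (p : ℂ)) (-(Complex.I * (Real.pi : ℂ) * ((k : ℂ) + 1/2))) +
          expInt (2 * (p : ℂ)) (Complex.I * (Real.pi : ℂ) * ((k : ℂ) + 1/2))) /
        ((Real.pi : ℂ) * ((k : ℂ) + 1/2)) ^ (2*p - 1)
      = 2 * (-1) ^ k *
          ∑ j ∈ Finset.Icc 1 (p - 1),
            (-1) ^ j * Complex.Gamma (2 * (j : ℂ)) /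
              ((Real.pi : ℂ) * ((k : ℂ) + 1/2)) ^ (2*j)
        - 2 * ((Si (Real.pi * ((k : ℝ) + 1/2)) : ℂ) - (Real.pi : ℂ) / 2) := by
  have h := stmt_18_general p hp (Real.pi * (k + 1 / 2)) (by positivity)
  rw [sin_pi_mul_natCast_add_half, cos_pi_mul_natCast_add_half] at h
  simpa [mul_assoc] using h
end
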